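/- arXiv:2005.04214 — 7 statements merged into one kernel-verified Lean document; each statement's English description precedes it below -/
import Mathlib

section
/- Let A be drawn from the Haar probability measure on the unitary group U(m), let n ≤ m, and define the Weingarten function Wg(α, m) = E(A_{1,1}⋯A_{n,n}·conj(A_{1,α(1)})⋯conj(A_{n,α(n)})) for α a permutation of {1,…,n}. Let i = (i_1,…,i_n), i′ = (i′_1,…,i′_n), j = (j_1,…,j_n), j′ = (j′_1,…,j′_n) be arrays of indices in {1,…,m}, and for a permutation α set δ_α(i, i′) = ∏_{k=1}^n [i_k = i′_{α(k)}] (1 if all equalities hold, 0 otherwise). Then E(A_{i_1,j_1}⋯A_{i_n,j_n}·conj(A_{i′_1,j′_1})⋯conj(A_{i′_n,j′_n})) = ∑_{α,β ∈ Perm([n])} δ_α(i, i′)·δ_β(j, j′)·Wg(α∘β⁻¹, m). -/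
/-!
For fixed column indices `j, j'`, the moment `f i i' = E(∏ₖ A_{iₖ,jₖ} conj A_{i'ₖ,j'ₖ})` is an
invariant tensor, by left invariance of Haar measure. The heart of the proof is that, for `n ≤ m`,
such a tensor is determined by its values at `i = (1, …, n)`:
`f i i' = ∑_α δ_α(i, i') f(id, α⁻¹)` (`Invariant.eq_sum`). This replaces Schur–Weyl duality.

Only two consequences of unitary invariance are used: invariance under permutation matrices, and
the infinitesimal relation for the matrix unit `E_{ab}`,
`∑_{k : iₖ = a} f(i[k ↦ b], i') = ∑_{k : i'ₖ = b} f(i, i'[k ↦ a])`.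
The differences `f - ∑_α δ_α f(id, α⁻¹)` satisfy them too and vanish at every `(id, id ∘ α)`, so it
suffices to show that an invariant `f` with these zeros is zero (`Invariant.eq_zero`). This goes by
descending induction on the number of distinct values of `i`. If `i` is injective, the relation
with `a = b` forces `i'` to be a rearrangement of `i` wherever `f i i' ≠ 0`, and a permutation
matrix moves `i` to `id`. If a value `a` is repeated, at position `k` say, pick `b` not among the
values of `i` (possible since `n ≤ m`); the relation based at `i[k ↦ b]`, moving `b` back to `a`,
writes `f i i'` as a sum of values `f(i[k ↦ b], _)`, and `i[k ↦ b]` has more distinct values.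

The infinitesimal relation for a skew-Hermitian `X` is obtained by differentiating
`t ↦ E(φ(exp(tX) A))`, which is constant, under the integral sign (`integral_deriv_eq_zero`); it
extends to all complex `X` by linearity (`moment_linear`).

Inversion `A ↦ A⁻¹ = Aᴴ` preserves Haar measure on a compact group and exchanges rows and columns
(`moment_flip`), so the same expansion holds in `j, j'`. The resulting coefficients are values of
`Wg` up to reindexing and permuting rows and columns (`moment_eq_Wg`).
-/

open MeasureTheory Matrix Finset

/-- The Weingarten function: `Wg(α, m) = E(A₁₁⋯Aₙₙ · conj(A_{1,α(1)})⋯conj(A_{n,α(n)}))` where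
the expectation is with respect to the measure `μ` on the unitary group `U(m)`. -/
noncomputable def Wg (m n : ℕ) (h : n ≤ m) [MeasurableSpace (unitaryGroup (Fin m) ℂ)]
    (μ : Measure (unitaryGroup (Fin m) ℂ)) (α : Equiv.Perm (Fin n)) : ℂ :=
  ∫ A : unitaryGroup (Fin m) ℂ,
    ∏ k : Fin n,
      ((A : Matrix (Fin m) (Fin m) ℂ) (Fin.castLE h k) (Fin.castLE h k) *
        (starRingEnd ℂ) ((A : Matrix (Fin m) (Fin m) ℂ) (Fin.castLE h k) (Fin.castLE h (α k)))) ∂μ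

namespace Weingarten
open Function

/-! ### One-parameter unitary groups and compactness of `U(m)` -/

section Curve
attribute [local instance] Matrix.linftyOpNormedRing Matrix.linftyOpNormedAlgebra

/-- A skew-Hermitian `X` is the velocity of a one-parameter subgroup of `U(m)`, namely `t ↦ exp(tX)`.
The derivative is taken entrywise, so that no matrix norm appears in the statement. -/
theorem exists_oneParam {m : ℕ} (X : Matrix (Fin m) (Fin m) ℂ) (hX : star X = -X) :
    ∃ u : ℝ → unitaryGroup (Fin m) ℂ, (∀ s t, u (s + t) = u s * u t) ∧
      ∀ p q, HasDerivAt (fun t => (u t : Matrix (Fin m) (Fin m) ℂ) p q) (X p q) 0 := by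
  have hmem : ∀ t : ℝ, NormedSpace.exp (t • X) ∈ unitaryGroup (Fin m) ℂ := by
    intro t
    have hs : star (NormedSpace.exp (t • X)) = NormedSpace.exp (-(t • X)) := by
      rw [Matrix.star_eq_conjTranspose, ← Matrix.exp_conjTranspose,
        ← Matrix.star_eq_conjTranspose, star_smul, hX]
      simp
    rw [Matrix.mem_unitaryGroup_iff, hs,
      ← Matrix.exp_add_of_commute _ _ (Commute.refl (t • X)).neg_right]
    simp
  refine ⟨fun t => ⟨NormedSpace.exp (t • X), hmem t⟩, ?_, ?_⟩
  · intro s t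
    apply Subtype.ext
    change NormedSpace.exp ((s + t) • X) = NormedSpace.exp (s • X) * NormedSpace.exp (t • X)
    rw [add_smul]
    exact NormedSpace.exp_add_of_commute (((Commute.refl X).smul_left s).smul_right t)
  · intro p q
    have h := hasDerivAt_exp_smul_const (𝕂 := ℝ) X 0
    rw [zero_smul, NormedSpace.exp_zero, one_mul] at h
    let L : Matrix (Fin m) (Fin m) ℂ →L[ℝ] ℂ :=
      LinearMap.toContinuousLinearMap (Matrix.entryLinearMap ℝ ℂ p q)
    exact L.hasFDerivAt.comp_hasDerivAt (0 : ℝ) h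

end Curve

instance compactSpace_unitaryGroup (m : ℕ) : CompactSpace (unitaryGroup (Fin m) ℂ) := by
  refine (isCompact_iff_compactSpace
    (s := (unitaryGroup (Fin m) ℂ : Set (Matrix (Fin m) (Fin m) ℂ)))).1 ?_
  have hK : IsCompact (Set.pi Set.univ fun _ : Fin m => Set.pi Set.univ fun _ : Fin m =>
      Metric.closedBall (0 : ℂ) 1) :=
    isCompact_univ_pi fun _ => isCompact_univ_pi fun _ => isCompact_closedBall _ _
  refine IsCompact.of_isClosed_subset hK
    (isClosed_unitary (R := Matrix (Fin m) (Fin m) ℂ)) ?_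
  intro U hU p _ q _
  simpa using entry_norm_bound_of_unitary hU p q

/-! ### Invariance of Haar measure on a compact group -/

section Group
variable {G : Type*} [Group G] [TopologicalSpace G] [IsTopologicalGroup G] [CompactSpace G]
  [MeasurableSpace G] [BorelSpace G] (μ : Measure G) [μ.IsHaarMeasure] [IsProbabilityMeasure μ]

/-- Both right translates and the inverse of a Haar probability measure are again Haar probability
measures, so uniqueness applies to each in turn. -/
theorem isInvInvariant_of_compact : μ.IsInvInvariant := by
  have hr : μ.IsMulRightInvariant := by
    refine ⟨fun g => ?_⟩
    have : IsProbabilityMeasure (μ.map (· * g)) :=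
      Measure.isProbabilityMeasure_map (measurable_mul_const g).aemeasurable
    exact Measure.isHaarMeasure_eq_of_isProbabilityMeasure _ _
  have : IsProbabilityMeasure μ.inv :=
    Measure.isProbabilityMeasure_map measurable_inv.aemeasurable
  have : μ.inv.IsOpenPosMeasure :=
    continuous_inv.isOpenPosMeasure_map inv_surjective
  have : μ.inv.IsHaarMeasure := {}
  exact ⟨Measure.isHaarMeasure_eq_of_isProbabilityMeasure _ _⟩

/-- The Lie derivative `D` of `φ` along a one-parameter subgroup has integral zero. Since the
derivative of `t ↦ φ (u t * A)` at `s` is `D (u s * A)`, a bound for `D` on the compact group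
dominates it and allows differentiation under the integral sign. -/
theorem integral_deriv_eq_zero (u : ℝ → G) (hu : ∀ s t, u (s + t) = u s * u t)
    (φ D : G → ℂ) (hφ : Continuous φ) (hD : Continuous D)
    (hd : ∀ A, HasDerivAt (fun t => φ (u t * A)) (D A) 0) : ∫ A, D A ∂μ = 0 := by
  have hu0 : u 0 = 1 := by simpa using hu 0 0
  have hder : ∀ A s, HasDerivAt (fun t => φ (u t * A)) (D (u s * A)) s := by
    intro A s
    have h := hd (u s * A)
    rw [← sub_self s] at h
    refine (h.comp_sub_const s s).congr_of_eventuallyEq (Filter.Eventually.of_forall fun t => ?_)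
    simp only [← mul_assoc, ← hu, sub_add_cancel]
  obtain ⟨C, hC⟩ := isCompact_univ.exists_bound_of_continuousOn hD.continuousOn
  have key := (hasDerivAt_integral_of_dominated_loc_of_deriv_le (μ := μ) (x₀ := (0 : ℝ))
    (F := fun t A => φ (u t * A)) (F' := fun t A => D (u t * A)) (bound := fun _ => C)
    Filter.univ_mem
    (Filter.Eventually.of_forall fun t =>
      (hφ.comp (continuous_const_mul (u t))).aestronglyMeasurable)
    ((hφ.comp (continuous_const_mul (u 0))).integrable_of_hasCompactSupport
      (HasCompactSupport.of_compactSpace _))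
    (hD.comp (continuous_const_mul (u 0))).aestronglyMeasurable
    (Filter.Eventually.of_forall fun A t _ => hC _ (Set.mem_univ _))
    (integrable_const C)
    (Filter.Eventually.of_forall fun A t _ => hder A t)).2
  simp only [integral_mul_left_eq_self φ, hu0, one_mul] at key
  exact key.unique (hasDerivAt_const _ _)

end Group

/-! ### Invariant tensors -/

section Tensor
variable {m n : ℕ}

/-- The consequences used here of `f` being fixed by `U^{⊗n} ⊗ conj U^{⊗n}` for all unitary `U`:
`swap` is the infinitesimal relation for the matrix unit `E_{ab}` and `perm` is invariance under
permutation matrices. -/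
structure Invariant (f : (Fin n → Fin m) → (Fin n → Fin m) → ℂ) : Prop where
  swap : ∀ i i' a b, (∑ k, if i k = a then f (update i k b) i' else 0) =
    ∑ k, if i' k = b then f i (update i' k a) else 0
  perm : ∀ (σ : Equiv.Perm (Fin m)) i i', f (σ ∘ i) (σ ∘ i') = f i i'

theorem exists_perm_comp (h : n ≤ m) {i : Fin n → Fin m} (hi : Injective i) :
    ∃ σ : Equiv.Perm (Fin m), σ ∘ Fin.castLE h = i := by
  obtain ⟨σ, hσ⟩ := Equiv.Perm.exists_extending_pair _ _ (Fin.castLE_injective h) hi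
  exact ⟨σ, funext hσ⟩

/-- The product of Kronecker deltas `δ_α(i, i') = ∏ₖ [iₖ = i'_{α(k)}]`. -/
def delta (α : Equiv.Perm (Fin n)) (i i' : Fin n → Fin m) : ℂ :=
  ∏ k, if i k = i' (α k) then 1 else 0

theorem delta_eq (α : Equiv.Perm (Fin n)) (i i' : Fin n → Fin m) :
    delta α i i' = if i = i' ∘ α then 1 else 0 := by
  classical
  unfold delta
  rw [Finset.prod_ite_zero]
  simp [funext_iff]

/-- In the relation `swap` for `δ_α`, the `k`-th term on the left equals the `α k`-th on the right. -/
theorem invariant_delta (α : Equiv.Perm (Fin n)) :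
    Invariant (m := m) (delta α) where
  swap i i' a b := by
    rw [← Equiv.sum_comp α (fun k => if i' k = b then delta α i (update i' k a) else 0)]
    refine Finset.sum_congr rfl fun k _ => ?_
    simp only [delta_eq, ← ite_and]
    refine if_congr ?_ rfl rfl
    simp only [funext_iff, Function.comp_apply, update_apply, α.injective.eq_iff]
    constructor
    · rintro ⟨h1, h2⟩
      refine ⟨by simpa using (h2 k).symm, fun l => ?_⟩
      have := h2 l
      split_ifs at this ⊢ with hl
      · rw [hl, h1]
      · exact this
    · rintro ⟨h1, h2⟩
      refine ⟨by simpa using (h2 k), fun l => ?_⟩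
      have := h2 l
      split_ifs at this ⊢ with hl
      · rw [hl, h1]
      · exact this
  perm σ i i' := by
    simp [delta, σ.injective.eq_iff]

/-- An invariant tensor vanishing at every `((1, …, n), (α(1), …, α(n)))` is zero; the induction is
on `n` minus the number of distinct values of `i`. -/
theorem Invariant.eq_zero (h : n ≤ m) {f : (Fin n → Fin m) → (Fin n → Fin m) → ℂ}
    (hf : Invariant f)
    (h0 : ∀ α : Equiv.Perm (Fin n), f (Fin.castLE h) (Fin.castLE h ∘ α) = 0) :
    ∀ i i', f i i' = 0 := by
  suffices H : ∀ N (i i' : Fin n → Fin m), n - (univ.image i).card = N → f i i' = 0 from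
    fun i i' => H _ i i' rfl
  intro N
  induction N using Nat.strong_induction_on with
  | _ N IH =>
  intro i i' hN
  by_cases hi : Injective i
  · by_contra hne
    -- the case `a = b` of the swap relation compares the multiplicities of `a` in `i` and `i'`
    have hcount : ∀ a, (univ.filter fun k => i k = a).card =
        (univ.filter fun k => i' k = a).card := by
      intro a
      have hs := hf.swap i i' a a
      have e1 : (∑ k, if i k = a then f (update i k a) i' else 0) =
          ∑ k, if i k = a then f i i' else 0 :=
        Finset.sum_congr rfl fun k _ => by
          split_ifs with hk
          · rw [← hk, update_eq_self]
          · rfl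
      have e2 : (∑ k, if i' k = a then f i (update i' k a) else 0) =
          ∑ k, if i' k = a then f i i' else 0 :=
        Finset.sum_congr rfl fun k _ => by
          split_ifs with hk
          · rw [← hk, update_eq_self]
          · rfl
      rw [e1, e2, ← Finset.sum_filter, ← Finset.sum_filter, Finset.sum_const, Finset.sum_const,
        nsmul_eq_mul, nsmul_eq_mul] at hs
      exact_mod_cast mul_right_cancel₀ hne hs
    have hex : ∀ k, ∃ l, i l = i' k := by
      intro k
      have : 0 < (univ.filter fun l => i l = i' k).card := by
        rw [hcount]
        exact Finset.card_pos.2 ⟨k, by simp⟩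
      obtain ⟨l, hl⟩ := Finset.card_pos.1 this
      exact ⟨l, by simpa using hl⟩
    choose g hg using hex
    have hgi : Injective g := by
      intro k l hkl
      have hkl' : i' k = i' l := by rw [← hg, ← hg, hkl]
      have hle : (univ.filter fun r => i' r = i' k).card ≤ 1 := by
        rw [← hcount]
        refine Finset.card_le_one.2 fun r hr s hs => hi ?_
        simp only [Finset.mem_filter, Finset.mem_univ, true_and] at hr hs
        rw [hr, hs]
      exact Finset.card_le_one.1 hle k (by simp) l (by simp [hkl'])
    let α : Equiv.Perm (Fin n) := Equiv.ofBijective g (Finite.injective_iff_bijective.1 hgi)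
    obtain ⟨σ, hσ⟩ := exists_perm_comp h hi
    apply hne
    rw [← h0 α, ← hf.perm σ (Fin.castLE h), hσ]
    congr 1
    funext k
    rw [← comp_assoc, hσ]
    exact (hg k).symm
  · obtain ⟨k, k', hkk, hne⟩ : ∃ k k', i k = i k' ∧ k ≠ k' := by
      simpa [Injective, and_comm] using hi
    have hlt : (univ.image i).card < n := by
      refine lt_of_le_of_ne (by simpa using Finset.card_image_le (s := univ) (f := i)) fun he => ?_
      apply hi
      have := Finset.card_image_iff.1 (he.trans (Finset.card_fin n).symm)
      simpa using this
    -- replacing the repeated value at position `k` by an unused `b` gains a distinct value,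
    -- since `i k` is still attained at `k'`
    obtain ⟨b, hb⟩ : ∃ b, b ∉ univ.image i := by
      by_contra! hall
      have : univ.image i = univ := Finset.eq_univ_iff_forall.2 hall
      rw [this, Finset.card_fin] at hlt
      omega
    have hb' : ∀ l, i l ≠ b := fun l hl => hb (by simp [← hl])
    have hcard : (univ.image i).card < (univ.image (update i k b)).card := by
      apply Finset.card_lt_card
      refine (Finset.ssubset_iff_of_subset ?_).2 ⟨b, by simpa using ⟨k, by simp⟩, hb⟩
      intro a ha
      obtain ⟨l, -, rfl⟩ := Finset.mem_image.1 ha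
      by_cases hl : l = k
      · exact Finset.mem_image.2 ⟨k', Finset.mem_univ _, by
          rw [update_of_ne hne.symm, hl, hkk]⟩
      · exact Finset.mem_image.2 ⟨l, Finset.mem_univ _, update_of_ne hl _ _⟩
    -- `b` occurs in `update i k b` only at `k`, so the left side is the value `f i i'` in question
    -- and the right side vanishes by induction
    have hs := hf.swap (update i k b) i' b (i k)
    rw [Finset.sum_eq_single k, Finset.sum_eq_zero] at hs
    · simpa using hs
    · intro l _
      split_ifs
      · exact IH _ (by omega) _ _ rfl
      · rfl
    · intro l _ hl
      rw [update_of_ne hl, if_neg (hb' l)]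
    · simp

/-- Invariant tensors are combinations of the `δ_α`; since `n ≤ m`, the coefficients can be read off
at `i = (1, …, n)`. -/
theorem Invariant.eq_sum (h : n ≤ m) {f : (Fin n → Fin m) → (Fin n → Fin m) → ℂ}
    (hf : Invariant f) (i i' : Fin n → Fin m) :
    f i i' = ∑ α : Equiv.Perm (Fin n),
      delta α i i' * f (Fin.castLE h) (Fin.castLE h ∘ α.symm) := by
  rw [← sub_eq_zero]
  refine Invariant.eq_zero h (f := fun i i' => f i i' - ∑ α : Equiv.Perm (Fin n),
      delta α i i' * f (Fin.castLE h) (Fin.castLE h ∘ α.symm)) ⟨?_, ?_⟩ ?_ i i'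
  · intro i i' a b
    have e : ∀ (p : Prop) [Decidable p] (x y : ℂ), (if p then x - y else 0) =
        (if p then x else 0) - if p then y else 0 := by
      intro p _ x y; split_ifs <;> simp
    have e' : ∀ (p : Prop) [Decidable p] (x : Equiv.Perm (Fin n) → ℂ),
        (if p then ∑ α, x α else 0) = ∑ α, if p then x α else 0 := by
      intro p _ x; split_ifs <;> simp
    simp only [e, e', Finset.sum_sub_distrib, hf.swap]
    congr 1
    rw [Finset.sum_comm, Finset.sum_comm (s := univ) (t := univ (α := Equiv.Perm (Fin n)))]
    refine Finset.sum_congr rfl fun α _ => ?_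
    simp only [← ite_zero_mul, ← Finset.sum_mul, (invariant_delta α).swap]
  · intro σ i i'
    simp only [hf.perm, (invariant_delta _).perm]
  · intro α
    rw [Finset.sum_eq_single α.symm]
    · rw [delta_eq, if_pos]
      · simp
      · funext k; simp
    · intro β _ hβ
      rw [delta_eq, if_neg, zero_mul]
      intro he
      apply hβ
      ext k
      have := congrFun he k
      simp only [Function.comp_apply] at this
      have := Fin.castLE_injective h this
      rw [show α.symm k = β k from (Equiv.symm_apply_eq α).2 this]
    · simp

end Tensor

/-! ### Moments of the matrix entries -/

section Moments
variable {m n : ℕ}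

/-- The monomial `∏ₖ A_{iₖ,jₖ} conj(A_{i'ₖ,j'ₖ})` in the entries of `A` and their conjugates. -/
def mono (i i' j j' : Fin n → Fin m) (A : Matrix (Fin m) (Fin m) ℂ) : ℂ :=
  ∏ k, (A (i k) (j k) * (starRingEnd ℂ) (A (i' k) (j' k)))

theorem continuous_mono (i i' j j' : Fin n → Fin m) :
    Continuous fun A : unitaryGroup (Fin m) ℂ => mono i i' j j' A := by
  have hA : ∀ p q, Continuous fun A : unitaryGroup (Fin m) ℂ =>
      (A : Matrix (Fin m) (Fin m) ℂ) p q := fun p q =>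
    continuous_subtype_val.matrix_elem p q
  exact continuous_finsetProd _ fun k _ =>
    (hA _ _).mul (Complex.continuous_conj.comp (hA _ _))

/-- Isolating the `k`-th factor, which is the only one affected by changing `i k`. -/
theorem mono_update_left (i i' j j' : Fin n → Fin m) (A : Matrix (Fin m) (Fin m) ℂ)
    (k : Fin n) (q : Fin m) :
    mono (update i k q) i' j j' A =
      (∏ l ∈ univ.erase k, (A (i l) (j l) * (starRingEnd ℂ) (A (i' l) (j' l)))) *
        (A q (j k) * (starRingEnd ℂ) (A (i' k) (j' k))) := by
  rw [mono, ← Finset.prod_erase_mul _ _ (Finset.mem_univ k), update_self]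
  congr 1
  refine Finset.prod_congr rfl fun l hl => ?_
  rw [update_of_ne (Finset.ne_of_mem_erase hl)]

theorem mono_update_right (i i' j j' : Fin n → Fin m) (A : Matrix (Fin m) (Fin m) ℂ)
    (k : Fin n) (q : Fin m) :
    mono i (update i' k q) j j' A =
      (∏ l ∈ univ.erase k, (A (i l) (j l) * (starRingEnd ℂ) (A (i' l) (j' l)))) *
        (A (i k) (j k) * (starRingEnd ℂ) (A q (j' k))) := by
  rw [mono, ← Finset.prod_erase_mul _ _ (Finset.mem_univ k), update_self]
  congr 1
  refine Finset.prod_congr rfl fun l hl => ?_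
  rw [update_of_ne (Finset.ne_of_mem_erase hl)]

/-- The derivative at `t = 0` of a monomial in the entries of `u t * A`, where `X` is the velocity
of `u`, is again a combination of monomials, each with one row index replaced. -/
theorem hasDerivAt_mono {X : Matrix (Fin m) (Fin m) ℂ} {u : ℝ → unitaryGroup (Fin m) ℂ}
    (hu0 : u 0 = 1)
    (hX : ∀ p q, HasDerivAt (fun t => (u t : Matrix (Fin m) (Fin m) ℂ) p q) (X p q) 0)
    (i i' j j' : Fin n → Fin m) (A : unitaryGroup (Fin m) ℂ) :
    HasDerivAt (fun t => mono i i' j j' (u t * A : unitaryGroup (Fin m) ℂ))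
      ((∑ k, ∑ q, X (i k) q * mono (update i k q) i' j j' A) +
        ∑ k, ∑ q, (starRingEnd ℂ) (X (i' k) q) * mono i (update i' k q) j j' A) 0 := by
  have hent : ∀ p r, HasDerivAt
      (fun t => ((u t * A : unitaryGroup (Fin m) ℂ) : Matrix (Fin m) (Fin m) ℂ) p r)
      (∑ q, X p q * (A : Matrix (Fin m) (Fin m) ℂ) q r) 0 := by
    intro p r
    simp only [Submonoid.coe_mul, Matrix.mul_apply]
    exact HasDerivAt.fun_sum fun q _ => (hX p q).mul_const _
  have h := HasDerivAt.fun_finsetProd (u := (univ : Finset (Fin n)))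
    fun k _ => (hent (i k) (j k)).mul (hent (i' k) (j' k)).star
  refine h.congr_deriv ?_
  rw [← Finset.sum_add_distrib]
  refine Finset.sum_congr rfl fun k _ => ?_
  simp only [hu0, one_mul, mono_update_left, mono_update_right, smul_eq_mul, mul_add,
    star_sum, Finset.mul_sum, Finset.sum_mul, star_mul', Complex.star_def, Pi.mul_apply]
  congr 1 <;> exact Finset.sum_congr rfl fun q _ => by ring

variable [MeasurableSpace (unitaryGroup (Fin m) ℂ)] (μ : Measure (unitaryGroup (Fin m) ℂ))

/-- The expectation of `mono i i' j j'` under `μ`. -/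
noncomputable def moment (i i' j j' : Fin n → Fin m) : ℂ :=
  ∫ A : unitaryGroup (Fin m) ℂ, mono i i' j j' A ∂μ

/-- The conjugated factors may be reordered independently of the others. -/
theorem moment_reindex (τ : Equiv.Perm (Fin n)) (i i' j j' : Fin n → Fin m) :
    moment μ i (i' ∘ τ) j (j' ∘ τ) = moment μ i i' j j' := by
  refine integral_congr_ae (Filter.Eventually.of_forall fun A => ?_)
  simp only [mono, Finset.prod_mul_distrib]
  congr 1
  exact Equiv.prod_comp τ fun k =>
    (starRingEnd ℂ) ((A : Matrix (Fin m) (Fin m) ℂ) (i' k) (j' k))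

variable [BorelSpace (unitaryGroup (Fin m) ℂ)] [μ.IsHaarMeasure]

theorem integrable_mono (i i' j j' : Fin n → Fin m) :
    Integrable (fun A : unitaryGroup (Fin m) ℂ => mono i i' j j' A) μ :=
  (continuous_mono i i' j j').integrable_of_hasCompactSupport (HasCompactSupport.of_compactSpace _)

variable [IsProbabilityMeasure μ]

/-- The infinitesimal invariance relation for skew-Hermitian `X`, written without conjugates by
means of `conj X_{pq} = -X_{qp}`. -/
theorem moment_skew {X : Matrix (Fin m) (Fin m) ℂ} (hX : star X = -X) (i i' j j' : Fin n → Fin m) :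
    (∑ k, ∑ q, X (i k) q * moment μ (update i k q) i' j j') -
      ∑ k, ∑ q, X q (i' k) * moment μ i (update i' k q) j j' = 0 := by
  obtain ⟨u, hu, hd⟩ := exists_oneParam X hX
  have hu0 : u 0 = 1 := by simpa using hu 0 0
  have h := integral_deriv_eq_zero μ u hu (fun A => mono i i' j j' A) _
    (continuous_mono i i' j j') (by
      refine Continuous.add ?_ ?_ <;>
      exact continuous_finsetSum _ fun k _ => continuous_finsetSum _ fun q _ =>
        continuous_const.mul (continuous_mono _ _ _ _))
    (hasDerivAt_mono hu0 hd i i' j j')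
  have hconj : ∀ p q, (starRingEnd ℂ) (X p q) = -X q p := by
    intro p q
    exact congrFun (congrFun hX q) p
  have hint : ∀ (c : Fin n → Fin m → ℂ) (a a' : Fin n → Fin m → Fin n → Fin m),
      Integrable (fun A : unitaryGroup (Fin m) ℂ =>
        ∑ k, ∑ q, c k q * mono (a k q) (a' k q) j j' A) μ ∧
      ∫ A : unitaryGroup (Fin m) ℂ, ∑ k, ∑ q, c k q * mono (a k q) (a' k q) j j' A ∂μ =
        ∑ k, ∑ q, c k q * moment μ (a k q) (a' k q) j j' := by
    intro c a a'
    have h1 : ∀ k q, Integrable (fun A : unitaryGroup (Fin m) ℂ =>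
        c k q * mono (a k q) (a' k q) j j' A) μ := fun k q =>
      (integrable_mono μ _ _ _ _).const_mul _
    refine ⟨integrable_finsetSum _ fun k _ => integrable_finsetSum _ fun q _ => h1 k q, ?_⟩
    rw [integral_finsetSum _ fun k _ => integrable_finsetSum _ fun q _ => h1 k q]
    refine Finset.sum_congr rfl fun k _ => ?_
    rw [integral_finsetSum _ fun q _ => h1 k q]
    exact Finset.sum_congr rfl fun q _ => integral_const_mul _ _
  obtain ⟨i1, e1⟩ := hint (fun k q => X (i k) q) (fun k q => update i k q) (fun _ _ => i')
  obtain ⟨i2, e2⟩ := hint (fun k q => (starRingEnd ℂ) (X (i' k) q)) (fun _ _ => i)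
    (fun k q => update i' k q)
  rw [integral_add i1 i2, e1, e2] at h
  simp only [hconj, neg_mul, Finset.sum_neg_distrib] at h
  rw [sub_eq_add_neg, h]

/-- The infinitesimal relation for arbitrary complex `X`: it is linear in `X`, and
`X = (X - Xᴴ) / 2 - (I / 2) • (I • (X + Xᴴ))` is a combination of skew-Hermitian matrices. -/
theorem moment_linear (X : Matrix (Fin m) (Fin m) ℂ) (i i' j j' : Fin n → Fin m) :
    (∑ k, ∑ q, X (i k) q * moment μ (update i k q) i' j j') -
      ∑ k, ∑ q, X q (i' k) * moment μ i (update i' k q) j j' = 0 := by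
  have h1 := moment_skew μ (X := X - star X) (by simp) i i' j j'
  have h2 := moment_skew μ (X := Complex.I • (X + star X)) (by
    rw [star_smul, star_add, star_star, add_comm (star X), Complex.star_def, Complex.conj_I,
      neg_smul]) i i' j j'
  simp only [Matrix.sub_apply, Matrix.add_apply, Matrix.smul_apply, smul_eq_mul, sub_mul, add_mul,
    mul_add, mul_assoc, Finset.sum_sub_distrib, Finset.sum_add_distrib, ← Finset.mul_sum] at h1 h2
  linear_combination (1 / 2 : ℂ) * h1 - (Complex.I / 2) * h2 +
    (1 / 2 : ℂ) * ((∑ k, ∑ q, X (i k) q * moment μ (update i k q) i' j j') +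
      (∑ k, ∑ q, (star X) (i k) q * moment μ (update i k q) i' j j') -
      (∑ k, ∑ q, X q (i' k) * moment μ i (update i' k q) j j') -
      (∑ k, ∑ q, (star X) q (i' k) * moment μ i (update i' k q) j j')) * Complex.I_sq

/-- The relation `swap` is `moment_linear` at the matrix unit `E_{ab}`. -/
theorem invariant_moment (j j' : Fin n → Fin m) :
    Invariant fun i i' => moment μ i i' j j' where
  swap i i' a b := by
    have h := sub_eq_zero.1 (moment_linear μ (Matrix.single a b 1) i i' j j')
    have e1 : ∀ k, (∑ q, Matrix.single a b (1 : ℂ) (i k) q * moment μ (update i k q) i' j j') =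
        if i k = a then moment μ (update i k b) i' j j' else 0 := by
      intro k
      rw [Finset.sum_eq_single b (fun q _ hq => by simp [hq.symm]) (by simp)]
      simp [Matrix.single_apply, eq_comm]
    have e2 : ∀ k, (∑ q, Matrix.single a b (1 : ℂ) q (i' k) * moment μ i (update i' k q) j j') =
        if i' k = b then moment μ i (update i' k a) j j' else 0 := by
      intro k
      rw [Finset.sum_eq_single a (fun q _ hq => by simp [hq.symm]) (by simp)]
      simp [Matrix.single_apply, eq_comm]
    simpa only [e1, e2] using h
  perm σ i i' := by
    have hP : (σ.permMatrix ℂ) ∈ unitaryGroup (Fin m) ℂ := by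
      rw [Matrix.mem_unitaryGroup_iff, Matrix.star_eq_conjTranspose, Matrix.conjTranspose_permMatrix,
        ← Matrix.permMatrix_mul]
      simp
    have hPA : ∀ (A : Matrix (Fin m) (Fin m) ℂ) p r,
        (σ.permMatrix ℂ * A) p r = A (σ p) r := by
      intro A p r
      rw [PEquiv.toMatrix_toPEquiv_mul]
      rfl
    symm
    rw [moment, moment,
      ← integral_mul_left_eq_self _ (⟨σ.permMatrix ℂ, hP⟩ : unitaryGroup (Fin m) ℂ)]
    simp [mono, hPA]

/-- The substitution `A ↦ A⁻¹ = Aᴴ` exchanges row and column indices. -/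
theorem moment_flip (i i' j j' : Fin n → Fin m) :
    moment μ i i' j j' = moment μ j' j i' i := by
  have := isInvInvariant_of_compact μ
  rw [moment, ← integral_inv_eq_self]
  refine integral_congr_ae (Filter.Eventually.of_forall fun A => ?_)
  refine Finset.prod_congr rfl fun k _ => ?_
  change (starRingEnd ℂ) _ * (starRingEnd ℂ) ((starRingEnd ℂ) _) = _
  rw [Complex.conj_conj, mul_comm]
  rfl

/-- The coefficient of `δ_α(i, i') δ_β(j, j')`. Reordering by `β⁻¹` and permuting the columns by an
extension `σ` of `α` turns the index arrays into `id, id, id, α ∘ β⁻¹`. -/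
theorem moment_eq_Wg (h : n ≤ m) (α β : Equiv.Perm (Fin n)) :
    moment μ (Fin.castLE h) (Fin.castLE h ∘ β) (Fin.castLE h ∘ α.symm) (Fin.castLE h) =
      Wg m n h μ (α * β⁻¹) := by
  obtain ⟨σ, hσ⟩ := exists_perm_comp h ((Fin.castLE_injective h).comp α.injective)
  rw [← moment_reindex μ β.symm, moment_flip, ← (invariant_moment μ _ _).perm σ, moment_flip,
    ← Function.comp_assoc, ← Function.comp_assoc, hσ, Function.comp_assoc, Function.comp_assoc,
    Function.comp_assoc]
  simp only [Equiv.self_comp_symm, Function.comp_id]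
  rfl

end Moments
end Weingarten

/-- Collins–Śniady formula: for `A` Haar-distributed on `U(m)` and index arrays
`i, i', j, j'`, the expectation `E(∏ₖ A_{iₖ,jₖ} · conj(A_{i'ₖ,j'ₖ}))` equals
`∑_{α,β} δ_α(i,i') δ_β(j,j') Wg(α ∘ β⁻¹, m)`. -/
theorem integral_prod_entries_eq_weingarten_sum (m n : ℕ) (h : n ≤ m)
    [MeasurableSpace (unitaryGroup (Fin m) ℂ)] [BorelSpace (unitaryGroup (Fin m) ℂ)]
    (μ : Measure (unitaryGroup (Fin m) ℂ)) [μ.IsHaarMeasure] [IsProbabilityMeasure μ]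
    (i i' j j' : Fin n → Fin m) :
    ∫ A : unitaryGroup (Fin m) ℂ,
        ∏ k : Fin n,
          ((A : Matrix (Fin m) (Fin m) ℂ) (i k) (j k) *
            (starRingEnd ℂ) ((A : Matrix (Fin m) (Fin m) ℂ) (i' k) (j' k))) ∂μ
      = ∑ α : Equiv.Perm (Fin n), ∑ β : Equiv.Perm (Fin n),
          (∏ k : Fin n, if i k = i' (α k) then (1 : ℂ) else 0) *
            (∏ k : Fin n, if j k = j' (β k) then (1 : ℂ) else 0) *
              Wg m n h μ (α * β⁻¹) := by
  change Weingarten.moment μ i i' j j' = ∑ α : Equiv.Perm (Fin n), ∑ β : Equiv.Perm (Fin n),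
    Weingarten.delta α i i' * Weingarten.delta β j j' * Wg m n h μ (α * β⁻¹)
  rw [(Weingarten.invariant_moment μ j j').eq_sum h]
  refine Finset.sum_congr rfl fun α _ => ?_
  -- expand the coefficient in the column indices; `δ_β(j', j)` is `δ_{β⁻¹}(j, j')`, hence the
  -- reindexing by inversion
  rw [Weingarten.moment_flip, (Weingarten.invariant_moment μ _ _).eq_sum h, Finset.mul_sum,
    ← Equiv.sum_comp (Equiv.inv (Equiv.Perm (Fin n)))]
  refine Finset.sum_congr rfl fun β _ => ?_
  rw [← Weingarten.moment_eq_Wg, mul_assoc]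
  congr 2
  rw [Weingarten.delta_eq, Weingarten.delta_eq]
  refine if_congr ?_ rfl rfl
  exact (Equiv.eq_comp_symm β j' j).trans eq_comm
end

section
/- Let A be drawn from the Haar probability measure on the unitary group U(m), let n ≤ m, and define the Weingarten function Wg(α, m) = E(A_{1,1}⋯A_{n,n}·conj(A_{1,α(1)})⋯conj(A_{n,α(n)})) for α a permutation of {1,…,n}. Then ∑_{α ∈ Perm([n])} Wg(α, m) = 1/(m(m+1)⋯(m+n−1)). -/
/-!
For rows `i, i'` and columns `j`, let `mom j i i' = E ∏ₖ A_{i k, j k} · conj A_{i' k, j k}`.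
Left multiplication by a rotation `exp (t X)` of the plane spanned by two basis vectors `p ≠ q`
preserves Haar measure; differentiating at `t = 0` gives a linear relation between such moments,
and the choices `X = z E_{pq} - conj z E_{qp}` with `z = 1, i` combine to the exchange identity
`mom_exchange`:

  `∑_{k : i k = q} mom j (i[k ↦ p]) i' = ∑_{k : i' k = p} mom j i (i'[k ↦ q])`.

It is used twice.

* Sum it over all reorderings `i ∘ σ` of the conjugated rows, and write
  `symMom j i = ∑_σ mom j i (i ∘ σ)`. If the value `q` occurs once in `i`, replacing it by `p`
  multiplies `symMom j i` by the number of `p`'s in the new word (`symMom_update`). Going from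
  the word `1 2 ⋯ n` to `1 1 ⋯ 1` one letter at a time multiplies it by `n!`, while
  `symMom j (1 ⋯ 1) = n! · E ∏ⱼ |A_{1j}|²` because all `n!` terms agree. Hence the sum of the
  Weingarten function, which is `symMom` at `1 2 ⋯ n`, equals `cₙ = E ∏_{j ≤ n} |A_{1j}|²`.
* Orthonormality of the columns of `A` expands `cₙ` as
  `∑_q ∑_{l ≤ n+1} mom j (P[n+1 ↦ q]) (P[l ↦ q])` with `P = (1, …, 1)` of length `n + 1`. The inner
  sum is `(n + 1) cₙ₊₁` for `q = 1`, and the exchange identity shows that it is `cₙ₊₁` for each of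
  the `m - 1` other values of `q`. So `cₙ = (m + n) cₙ₊₁`, and `c₀ = 1`.
-/

open MeasureTheory Matrix Finset

/-! ### Compactness and integrability -/

lemma compactSpace_unitaryGroup (m : ℕ) : CompactSpace (unitaryGroup (Fin m) ℂ) := by
  have hK : IsCompact (Set.pi Set.univ fun _ : Fin m => Set.pi Set.univ fun _ : Fin m =>
      Metric.closedBall (0 : ℂ) 1) :=
    isCompact_univ_pi fun _ => isCompact_univ_pi fun _ => isCompact_closedBall 0 1
  have hC : IsClosed {A : Matrix (Fin m) (Fin m) ℂ | star A * A = 1} :=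
    isClosed_eq (by fun_prop) continuous_const
  have hU : IsCompact (unitaryGroup (Fin m) ℂ : Set (Matrix (Fin m) (Fin m) ℂ)) := by
    refine hK.of_isClosed_subset ?_ ?_
    · rwa [show (unitaryGroup (Fin m) ℂ : Set (Matrix (Fin m) (Fin m) ℂ)) =
        {A | star A * A = 1} from Set.ext fun A => mem_unitaryGroup_iff']
    · intro A hA i _ j _
      simpa using entry_norm_bound_of_unitary hA i j
  exact isCompact_iff_compactSpace.mp hU

section Moments

variable {m : ℕ} [MeasurableSpace (unitaryGroup (Fin m) ℂ)]
  [BorelSpace (unitaryGroup (Fin m) ℂ)]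
  (μ : Measure (unitaryGroup (Fin m) ℂ)) {ι : Type} [Fintype ι] [DecidableEq ι]

lemma integrable_of_cont [IsProbabilityMeasure μ] {f : unitaryGroup (Fin m) ℂ → ℂ}
    (hf : Continuous f) : Integrable f μ := by
  have := compactSpace_unitaryGroup m
  obtain ⟨C, hC⟩ := isCompact_univ.exists_bound_of_continuousOn hf.continuousOn
  exact Integrable.of_bound hf.aestronglyMeasurable C (.of_forall fun x => hC x trivial)

omit [MeasurableSpace (unitaryGroup (Fin m) ℂ)] [BorelSpace (unitaryGroup (Fin m) ℂ)] in
lemma continuous_entry (i j : Fin m) :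
    Continuous fun A : unitaryGroup (Fin m) ℂ => (A : Matrix (Fin m) (Fin m) ℂ) i j :=
  continuous_subtype_val.matrix_elem i j

/-! ### Differentiating the invariance under rotations -/

/-- The one-parameter family `1 + (cos t - 1) D + sin t X`. When `D` is an orthogonal projection
and `X` is skew-Hermitian with `X² = -D` and `D X = X D = X`, it equals `exp (t X)`. -/
noncomputable def rot (D X : Matrix (Fin m) (Fin m) ℂ) (t : ℝ) : Matrix (Fin m) (Fin m) ℂ :=
  1 + ((Real.cos t : ℂ) - 1) • D + (Real.sin t : ℂ) • X

omit [MeasurableSpace (unitaryGroup (Fin m) ℂ)] [BorelSpace (unitaryGroup (Fin m) ℂ)] in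
lemma rot_mem {D X : Matrix (Fin m) (Fin m) ℂ} (hD : star D = D) (hX : star X = -X)
    (hDD : D * D = D) (hDX : D * X = X) (hXD : X * D = X) (hXX : X * X = -D) (t : ℝ) :
    rot D X t ∈ unitaryGroup (Fin m) ℂ := by
  rw [mem_unitaryGroup_iff]
  have h1 : star (rot D X t) = 1 + ((Real.cos t : ℂ) - 1) • D - (Real.sin t : ℂ) • X := by
    simp only [rot, star_add, star_smul, hD, hX, star_one, star_sub]
    simp [sub_eq_add_neg, -Complex.ofReal_cos, -Complex.ofReal_sin]
  have h2 : (Real.sin t : ℂ) * Real.sin t + (Real.cos t : ℂ) * Real.cos t = 1 := by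
    exact_mod_cast (by nlinarith [Real.sin_sq_add_cos_sq t])
  rw [h1, rot]
  generalize (Real.sin t : ℂ) = s at *
  generalize (Real.cos t : ℂ) = c at *
  simp only [add_mul, mul_sub, mul_add, one_mul, mul_one, smul_mul_assoc, mul_smul_comm, hDD, hDX,
    hXD, hXX]
  linear_combination (norm := module) h2 • D

omit [BorelSpace (unitaryGroup (Fin m) ℂ)] in
lemma integral_comb {f g h l : unitaryGroup (Fin m) ℂ → ℂ} {a b c d : ℂ}
    (hf : Integrable f μ) (hg : Integrable g μ) (hh : Integrable h μ) (hl : Integrable l μ) :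
    ∫ A, (a * f A - b * g A + c * h A - d * l A) ∂μ =
      a * ∫ A, f A ∂μ - b * ∫ A, g A ∂μ + c * ∫ A, h A ∂μ - d * ∫ A, l A ∂μ := by
  have h1 : Integrable (fun A => a * f A - b * g A) μ := (hf.const_mul a).sub (hg.const_mul b)
  have h2 : Integrable (fun A => a * f A - b * g A + c * h A) μ := h1.add (hh.const_mul c)
  simp only [← integral_const_mul]
  rw [← integral_sub (hf.const_mul a) (hg.const_mul b), ← integral_add h1 (hh.const_mul c),
    ← integral_sub h2 (hl.const_mul d)]

/-- If the expectation of a product of continuously differentiable functions of `t` does not depend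
on `t`, then the expectation of its derivative, expanded by the Leibniz rule, vanishes at
`t = 0`. Compactness of the unitary group bounds the derivative and permits differentiation under
the integral. -/
lemma integral_deriv_prod_eq_zero [IsProbabilityMeasure μ]
    {f f' : ι → ℝ → unitaryGroup (Fin m) ℂ → ℂ}
    (hf : ∀ k, Continuous fun x : ℝ × unitaryGroup (Fin m) ℂ => f k x.1 x.2)
    (hf' : ∀ k, Continuous fun x : ℝ × unitaryGroup (Fin m) ℂ => f' k x.1 x.2)
    (hd : ∀ k t A, HasDerivAt (fun t => f k t A) (f' k t A) t)
    (hconst : ∀ t, ∫ A, ∏ k, f k t A ∂μ = ∫ A, ∏ k, f k 0 A ∂μ) :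
    ∫ A, ∑ k, (∏ l ∈ univ.erase k, f l 0 A) * f' k 0 A ∂μ = 0 := by
  have := compactSpace_unitaryGroup m
  let F : ℝ → unitaryGroup (Fin m) ℂ → ℂ := fun t A => ∏ k, f k t A
  let F' : ℝ → unitaryGroup (Fin m) ℂ → ℂ := fun t A =>
    ∑ k, (∏ l ∈ univ.erase k, f l t A) * f' k t A
  have hFd : ∀ t A, HasDerivAt (fun t => F t A) (F' t A) t := fun t A =>
    HasDerivAt.fun_finsetProd (u := univ) fun k _ => hd k t A
  have hFc : Continuous fun x : ℝ × unitaryGroup (Fin m) ℂ => F x.1 x.2 :=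
    continuous_finsetProd _ fun k _ => hf k
  have hFc' : Continuous fun x : ℝ × unitaryGroup (Fin m) ℂ => F' x.1 x.2 :=
    continuous_finsetSum _ fun k _ => (continuous_finsetProd _ fun l _ => hf l).mul (hf' k)
  have hFt : ∀ t, Continuous (F t) := fun t => hFc.comp (by fun_prop : Continuous fun A => (t, A))
  have hFt' : Continuous (F' 0) := hFc'.comp (by fun_prop : Continuous fun A => ((0 : ℝ), A))
  obtain ⟨C, hC⟩ := ((isCompact_Icc (a := (-1 : ℝ)) (b := 1)).prod
    (isCompact_univ (X := unitaryGroup (Fin m) ℂ))).exists_bound_of_continuousOn hFc'.continuousOn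
  have key := (hasDerivAt_integral_of_dominated_loc_of_deriv_le (μ := μ) (F := F) (F' := F')
    (x₀ := (0 : ℝ)) (s := Set.Icc (-1) 1) (bound := fun _ => C)
    (Icc_mem_nhds (by norm_num) (by norm_num))
    (.of_forall fun t => (hFt t).aestronglyMeasurable) (integrable_of_cont μ (hFt 0))
    hFt'.aestronglyMeasurable (.of_forall fun A t ht => hC (t, A) ⟨ht, trivial⟩)
    (integrable_const _) (.of_forall fun A t _ => hFd t A)).2
  exact key.unique ((hasDerivAt_const (0 : ℝ) (∫ A, F 0 A ∂μ)).congr_of_eventuallyEq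
    (.of_forall hconst))

/-- The generator `X` of a rotation acts on products of matrix entries and their conjugates as a
derivation, which the expectation annihilates. -/
lemma integral_derivation_eq_zero [μ.IsMulLeftInvariant] [IsProbabilityMeasure μ]
    {D X : Matrix (Fin m) (Fin m) ℂ} (hD : star D = D) (hX : star X = -X)
    (hDD : D * D = D) (hDX : D * X = X) (hXD : X * D = X) (hXX : X * X = -D)
    (j i i' : ι → Fin m) :
    ∫ A : unitaryGroup (Fin m) ℂ, ∑ k,
      (∏ l ∈ univ.erase k, (A.1 (i l) (j l) * (starRingEnd ℂ) (A.1 (i' l) (j l)))) *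
      ((X * A.1) (i k) (j k) * (starRingEnd ℂ) (A.1 (i' k) (j k)) +
        A.1 (i k) (j k) * (starRingEnd ℂ) ((X * A.1) (i' k) (j k))) ∂μ = 0 := by
  -- `e r c t A` is the `(r, c)` entry of `rot D X t * A`, and `e'` is its derivative in `t`.
  let e : Fin m → Fin m → ℝ → unitaryGroup (Fin m) ℂ → ℂ := fun r c t A =>
    A.1 r c + ((Real.cos t : ℂ) - 1) * (D * A.1) r c + (Real.sin t : ℂ) * (X * A.1) r c
  let e' : Fin m → Fin m → ℝ → unitaryGroup (Fin m) ℂ → ℂ := fun r c t A =>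
    (-Real.sin t : ℂ) * (D * A.1) r c + (Real.cos t : ℂ) * (X * A.1) r c
  have he : ∀ r c t A, e r c t A = (rot D X t * A.1) r c := by
    intro r c t A
    simp [e, rot, add_mul]
  have h0 : rot D X 0 = 1 := by simp [rot]
  have hed : ∀ r c t A, HasDerivAt (fun t => e r c t A) (e' r c t A) t := by
    intro r c t A
    have h1 : HasDerivAt (fun t : ℝ => (Real.cos t : ℂ)) (-Real.sin t : ℂ) t := by
      simpa using (Real.hasDerivAt_cos t).ofReal_comp
    have h2 : HasDerivAt (fun t : ℝ => (Real.sin t : ℂ)) (Real.cos t : ℂ) t :=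
      (Real.hasDerivAt_sin t).ofReal_comp
    exact (((h1.sub_const 1).mul_const _).const_add _).add (h2.mul_const _)
  have hmul : ∀ (M : Matrix (Fin m) (Fin m) ℂ) r c,
      Continuous fun A : unitaryGroup (Fin m) ℂ => (M * A.1) r c := fun M r c =>
    (continuous_const.matrix_mul continuous_subtype_val).matrix_elem r c
  have hec : ∀ r c, Continuous fun x : ℝ × unitaryGroup (Fin m) ℂ => e r c x.1 x.2 := by
    intro r c
    have h1 := (continuous_entry r c).comp (continuous_snd (X := ℝ))
    have h2 := (hmul D r c).comp (continuous_snd (X := ℝ))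
    have h3 := (hmul X r c).comp (continuous_snd (X := ℝ))
    have h4 : Continuous fun x : ℝ × unitaryGroup (Fin m) ℂ => (Real.cos x.1 : ℂ) := by fun_prop
    have h5 : Continuous fun x : ℝ × unitaryGroup (Fin m) ℂ => (Real.sin x.1 : ℂ) := by fun_prop
    exact (h1.add ((h4.sub continuous_const).mul h2)).add (h5.mul h3)
  have hec' : ∀ r c, Continuous fun x : ℝ × unitaryGroup (Fin m) ℂ => e' r c x.1 x.2 := by
    intro r c
    have h2 := (hmul D r c).comp (continuous_snd (X := ℝ))
    have h3 := (hmul X r c).comp (continuous_snd (X := ℝ))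
    have h4 : Continuous fun x : ℝ × unitaryGroup (Fin m) ℂ => (Real.cos x.1 : ℂ) := by fun_prop
    have h5 : Continuous fun x : ℝ × unitaryGroup (Fin m) ℂ => (Real.sin x.1 : ℂ) := by fun_prop
    exact (h5.neg.mul h2).add (h4.mul h3)
  have key := integral_deriv_prod_eq_zero μ
    (f := fun k t A => e (i k) (j k) t A * (starRingEnd ℂ) (e (i' k) (j k) t A))
    (f' := fun k t A => e' (i k) (j k) t A * (starRingEnd ℂ) (e (i' k) (j k) t A) +
        e (i k) (j k) t A * (starRingEnd ℂ) (e' (i' k) (j k) t A))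
    (fun k => (hec _ _).mul (Complex.continuous_conj.comp (hec _ _)))
    (fun k => ((hec' _ _).mul (Complex.continuous_conj.comp (hec _ _))).add
      ((hec _ _).mul (Complex.continuous_conj.comp (hec' _ _))))
    (fun k t A => (hed (i k) (j k) t A).mul (hed (i' k) (j k) t A).star) (by
      intro t
      rw [← integral_mul_left_eq_self
        (fun A => ∏ k, e (i k) (j k) 0 A * (starRingEnd ℂ) (e (i' k) (j k) 0 A))
        (⟨rot D X t, rot_mem hD hX hDD hDX hXD hXX t⟩ : unitaryGroup (Fin m) ℂ)]
      simp only [he, h0, one_mul, Submonoid.coe_mul])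
  have he0 : ∀ r c A, e r c 0 A = A.1 r c := fun r c A => by rw [he, h0, one_mul]
  have he0' : ∀ r c A, e' r c 0 A = (X * A.1) r c := fun r c A => by simp [e']
  simpa only [he0, he0'] using key

/-! ### The exchange identity -/

/-- The mixed moment `E ∏ₖ A_{i k, j k} · conj A_{i' k, j k}` of the entries of `A`: columns `j`,
rows `i` for the holomorphic factors and `i'` for the conjugated ones. -/
noncomputable def mom (j i i' : ι → Fin m) : ℂ :=
  ∫ A : unitaryGroup (Fin m) ℂ,
    ∏ k, (A.1 (i k) (j k) * (starRingEnd ℂ) (A.1 (i' k) (j k))) ∂μ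

/-- The elementary matrix `E_{qp}` of the complexified Lie algebra acts on moments as a derivation
annihilated by the expectation: changing one row index `q` into `p` in the holomorphic factors, in
all possible ways, balances changing one `p` into `q` in the conjugated ones. -/
lemma mom_exchange [μ.IsMulLeftInvariant] [IsProbabilityMeasure μ]
    {p q : Fin m} (hpq : p ≠ q) (j i i' : ι → Fin m) :
    ∑ k with i k = q, mom μ j (Function.update i k p) i' =
      ∑ k with i' k = p, mom μ j i (Function.update i' k q) := by
  have hu : ∀ k r, mom μ j (Function.update i k r) i' = ∫ A : unitaryGroup (Fin m) ℂ,
      (∏ l ∈ univ.erase k, (A.1 (i l) (j l) * (starRingEnd ℂ) (A.1 (i' l) (j l)))) *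
      (A.1 r (j k) * (starRingEnd ℂ) (A.1 (i' k) (j k))) ∂μ := by
    intro k r
    unfold mom
    congr 1
    ext A
    rw [← prod_erase_mul _ _ (mem_univ k)]
    congr 1
    · refine prod_congr rfl fun l hl => ?_
      rw [Function.update_of_ne (ne_of_mem_erase hl)]
    · simp
  have hu' : ∀ k r, mom μ j i (Function.update i' k r) = ∫ A : unitaryGroup (Fin m) ℂ,
      (∏ l ∈ univ.erase k, (A.1 (i l) (j l) * (starRingEnd ℂ) (A.1 (i' l) (j l)))) *
      (A.1 (i k) (j k) * (starRingEnd ℂ) (A.1 r (j k))) ∂μ := by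
    intro k r
    unfold mom
    congr 1
    ext A
    rw [← prod_erase_mul _ _ (mem_univ k)]
    congr 1
    · refine prod_congr rfl fun l hl => ?_
      rw [Function.update_of_ne (ne_of_mem_erase hl)]
    · simp
  -- The relation coming from the skew-Hermitian matrix `z E_{pq} - conj z E_{qp}`, `|z| = 1`.
  have hz : ∀ z : ℂ, z * star z = 1 →
      z * (∑ k with i k = p, mom μ j (Function.update i k q) i')
      - star z * (∑ k with i k = q, mom μ j (Function.update i k p) i')
      + star z * (∑ k with i' k = p, mom μ j i (Function.update i' k q))
      - z * (∑ k with i' k = q, mom μ j i (Function.update i' k p)) = 0 := by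
    intro z hz
    have hz' : star z * z = 1 := by rw [mul_comm]; exact hz
    have key := integral_derivation_eq_zero μ (D := single p p 1 + single q q 1)
      (X := single p q z - single q p (star z))
      (by simp [star_eq_conjTranspose]) (by simp [star_eq_conjTranspose])
      (by simp [add_mul, mul_add, hpq, hpq.symm])
      (by simp [add_mul, mul_add, hpq, hpq.symm, sub_eq_add_neg])
      (by simp [add_mul, mul_add, hpq, hpq.symm, sub_eq_add_neg, add_comm])
      (by
        simp only [sub_mul, mul_sub, single_mul_single_same, ne_eq, hpq, hpq.symm,
          not_false_eq_true, single_mul_single_of_ne, hz, hz']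
        abel) j i i'
    have hX : ∀ (A : Matrix (Fin m) (Fin m) ℂ) r c,
        ((single p q z - single q p (star z)) * A) r c =
          (if r = p then z * A q c else 0) - (if r = q then star z * A p c else 0) := by
      intro A r c
      have h1 : ∀ (a b : Fin m) (w : ℂ),
          (single a b w * A) r c = if r = a then w * A b c else 0 := by
        intro a b w
        split_ifs with h
        · subst h; simp
        · simp [h]
      rw [sub_mul, Matrix.sub_apply, h1, h1]
    have hint : ∀ (k : ι) (a b c d : Fin m), Integrable (fun A : unitaryGroup (Fin m) ℂ =>
        (∏ l ∈ univ.erase k, (A.1 (i l) (j l) * (starRingEnd ℂ) (A.1 (i' l) (j l)))) *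
        (A.1 a b * (starRingEnd ℂ) (A.1 c d))) μ := fun k a b c d => integrable_of_cont μ <|
      (continuous_finsetProd _ fun l _ => (continuous_entry _ _).mul
        (Complex.continuous_conj.comp (continuous_entry _ _))).mul
        ((continuous_entry _ _).mul (Complex.continuous_conj.comp (continuous_entry _ _)))
    have hsplit : ∀ (k : ι) (A : unitaryGroup (Fin m) ℂ),
        (∏ l ∈ univ.erase k, (A.1 (i l) (j l) * (starRingEnd ℂ) (A.1 (i' l) (j l)))) *
        (((single p q z - single q p (star z)) * A.1) (i k) (j k) *
          (starRingEnd ℂ) (A.1 (i' k) (j k)) +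
        A.1 (i k) (j k) * (starRingEnd ℂ)
          (((single p q z - single q p (star z)) * A.1) (i' k) (j k))) =
        (if i k = p then z else 0) * ((∏ l ∈ univ.erase k,
          (A.1 (i l) (j l) * (starRingEnd ℂ) (A.1 (i' l) (j l)))) *
            (A.1 q (j k) * (starRingEnd ℂ) (A.1 (i' k) (j k)))) -
        (if i k = q then star z else 0) * ((∏ l ∈ univ.erase k,
          (A.1 (i l) (j l) * (starRingEnd ℂ) (A.1 (i' l) (j l)))) *
            (A.1 p (j k) * (starRingEnd ℂ) (A.1 (i' k) (j k)))) +
        (if i' k = p then star z else 0) * ((∏ l ∈ univ.erase k,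
          (A.1 (i l) (j l) * (starRingEnd ℂ) (A.1 (i' l) (j l)))) *
            (A.1 (i k) (j k) * (starRingEnd ℂ) (A.1 q (j k)))) -
        (if i' k = q then z else 0) * ((∏ l ∈ univ.erase k,
          (A.1 (i l) (j l) * (starRingEnd ℂ) (A.1 (i' l) (j l)))) *
            (A.1 (i k) (j k) * (starRingEnd ℂ) (A.1 p (j k)))) := by
      intro k A
      rw [hX, hX]
      simp only [apply_ite (starRingEnd ℂ), map_sub, map_mul, map_zero, RCLike.star_def,
        Complex.conj_conj, ← ite_zero_mul]
      ring
    simp only [hsplit] at key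
    have hc := fun (w : ℂ) (k : ι) (a b c d : Fin m) => (hint k a b c d).const_mul w
    rw [integral_finsetSum] at key
    · rw [← key]
      simp only [sum_filter, mul_sum, ← sum_add_distrib, ← sum_sub_distrib, hu, hu']
      refine sum_congr rfl fun k _ => ?_
      rw [integral_comb μ (hint _ _ _ _ _) (hint _ _ _ _ _) (hint _ _ _ _ _) (hint _ _ _ _ _)]
      simp only [ite_mul, zero_mul, mul_ite, mul_zero]
    · intro k _
      exact (((hc _ _ _ _ _ _).sub (hc _ _ _ _ _ _)).add (hc _ _ _ _ _ _)).sub (hc _ _ _ _ _ _)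
  -- With `a, b, c, d` the sums named below, `z = 1` gives `c - a + b - d = 0` and `z = i` gives
  -- `i (c + a - b - d) = 0`; together they isolate `a = b`, the part linear in `conj z`.
  have h1 := hz 1 (by simp)
  have h2 := hz Complex.I (by simp)
  simp only [star_one, one_mul, RCLike.star_def, Complex.conj_I] at h1 h2
  have h3 : Complex.I * Complex.I = -1 := Complex.I_mul_I
  generalize (∑ k with i k = q, mom μ j (Function.update i k p) i') = a at *
  generalize (∑ k with i' k = p, mom μ j i (Function.update i' k q)) = b at *
  generalize (∑ k with i k = p, mom μ j (Function.update i k q) i') = c at *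
  generalize (∑ k with i' k = q, mom μ j i (Function.update i' k p)) = d at *
  linear_combination (-1/2 : ℂ) * h1 - Complex.I / 2 * h2 + (c / 2 + a/2 - b/2 - d/2) * h3

/-! ### Symmetrized moments and reduction to a single row -/

/-- The sum of the mixed moments whose conjugated rows run over all reorderings `i ∘ σ` of the
holomorphic rows `i`. The sum is over permutations, so it counts with multiplicity when `i` is not
injective. -/
noncomputable def symMom (j i : ι → Fin m) : ℂ :=
  ∑ σ : Equiv.Perm ι, mom μ j i (i ∘ σ)

/-- If the row `q` occurs in `i` only at `k₀`, then replacing it by `p` multiplies the symmetrized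
moment by the number of occurrences of `p` after the replacement. -/
lemma symMom_update [μ.IsMulLeftInvariant] [IsProbabilityMeasure μ]
    {p q : Fin m} (hpq : p ≠ q) (j i : ι → Fin m) (k₀ : ι) (hk₀ : ∀ k, i k = q ↔ k = k₀) :
    symMom μ j (Function.update i k₀ p) =
      #{l | Function.update i k₀ p l = p} * symMom μ j i := by
  set i₁ := Function.update i k₀ p with hi₁
  have hq : i k₀ = q := (hk₀ k₀).2 rfl
  -- Changing a `p` at position `k` of `i₁ ∘ σ` into `q` gives `i` composed with the permutation
  -- `σ` followed by the transposition of `σ k` and `k₀`.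
  have step : ∀ σ : Equiv.Perm ι, mom μ j i₁ (i₁ ∘ σ) =
      ∑ l with i₁ l = p, mom μ j i (i ∘ (Equiv.swap l k₀ * σ : Equiv.Perm ι)) := by
    intro σ
    have h := mom_exchange μ hpq j i (i₁ ∘ σ)
    rw [show ({k | i k = q} : Finset ι) = {k₀} by ext k; simp [hk₀], sum_singleton, ← hi₁] at h
    rw [h, sum_filter, sum_filter]
    refine Fintype.sum_equiv σ _ _ fun k => ?_
    simp only [Function.comp_apply]
    split_ifs with hk
    · congr 1
      funext x
      by_cases hx : x = k
      · subst hx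
        simp [hq]
      · have hx' : σ x ≠ σ k := fun h => hx (σ.injective h)
        simp only [Function.update_of_ne hx, Function.comp_apply, Equiv.Perm.coe_mul]
        by_cases hx0 : σ x = k₀
        · rw [hx0] at hx' ⊢
          rw [Equiv.swap_apply_right, hi₁, Function.update_self]
          rw [hi₁, Function.update_of_ne hx'.symm] at hk
          exact hk.symm
        · rw [Equiv.swap_apply_of_ne_of_ne hx' hx0, hi₁, Function.update_of_ne hx0]
    · rfl
  unfold symMom
  simp only [step]
  rw [sum_comm, ← nsmul_eq_mul, ← sum_const]
  refine sum_congr rfl fun l _ => ?_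
  exact Equiv.sum_comp (Equiv.mulLeft (Equiv.swap l k₀)) fun σ => mom μ j i (i ∘ σ)

/-- The symmetrized moment with pairwise distinct rows `0, …, n` is a moment of the first row
alone, `E ∏ⱼ |A_{0j}|²`. -/
lemma symMom_initial [μ.IsMulLeftInvariant] [IsProbabilityMeasure μ] {n : ℕ} (h : n + 1 ≤ m) :
    symMom μ (Fin.castLE h) (Fin.castLE h) =
      mom μ (Fin.castLE h) (fun _ => Fin.castLE h 0) (fun _ => Fin.castLE h 0) := by
  -- `a r` is the word `0 1 ⋯ n` with its first `r` letters replaced by `0`.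
  let a : ℕ → Fin (n + 1) → Fin m := fun r k =>
    if (k : ℕ) < r then Fin.castLE h 0 else Fin.castLE h k
  have ha1 : a 1 = Fin.castLE h := by
    funext k
    simp only [a]
    split_ifs with hk
    · rw [show k = 0 from Fin.ext (by rw [Fin.val_zero]; omega)]
    · rfl
  have hstep : ∀ r, r ≤ n → symMom μ (Fin.castLE h) (a (r + 1)) =
      (r + 1).factorial * symMom μ (Fin.castLE h) (a 1) := by
    intro r
    induction r with
    | zero => simp
    | succ r ih =>
      intro hr
      have hu : a (r + 1 + 1) =
          Function.update (a (r + 1)) ⟨r + 1, by omega⟩ (Fin.castLE h 0) := by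
        funext k
        by_cases hk : k = ⟨r + 1, by omega⟩
        · subst hk
          simp [a]
        · rw [Function.update_of_ne hk]
          have hk' : (k : ℕ) ≠ r + 1 := fun h => hk (Fin.ext h)
          simp only [a, show ((k : ℕ) < r + 1 + 1) ↔ (k : ℕ) < r + 1 by omega]
      have key := symMom_update μ (p := Fin.castLE h 0) (q := Fin.castLE h ⟨r + 1, by omega⟩)
        (by simp [Fin.ext_iff]) (Fin.castLE h) (a (r + 1)) ⟨r + 1, by omega⟩ (by
          intro k
          simp only [a, Fin.ext_iff]
          split_ifs with hk <;> simp <;> omega)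
      have hcard : #{l | a (r + 1 + 1) l = Fin.castLE h 0} = r + 2 := by
        have : ({l | a (r + 1 + 1) l = Fin.castLE h 0} : Finset (Fin (n + 1))) =
            univ.filter fun l : Fin (n + 1) => (l : ℕ) < r + 2 := by
          ext l
          simp only [a, mem_filter, mem_univ, true_and]
          split_ifs with hl
          · exact iff_of_true rfl hl
          · simp only [Fin.ext_iff, Fin.val_castLE, Fin.val_zero]; omega
        rw [this, Fin.card_filter_val_lt]
        omega
      rw [← hu, hcard, ih (by omega)] at key
      rw [key, Nat.factorial_succ (r + 1)]
      push_cast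
      ring
  have hn := hstep n le_rfl
  have han : a (n + 1) = fun _ => Fin.castLE h 0 := by
    funext k
    exact if_pos k.2
  rw [ha1, han] at hn
  have hc : symMom μ (Fin.castLE h) (fun _ => Fin.castLE h 0) = (n + 1).factorial *
      mom μ (Fin.castLE h) (fun _ : Fin (n + 1) => Fin.castLE h 0) (fun _ => Fin.castLE h 0) := by
    simp [symMom, Function.comp_def, Fintype.card_perm]
  rw [hc] at hn
  exact (mul_left_cancel₀ (by exact_mod_cast (Nat.factorial_pos _).ne') hn).symm

/-! ### Moments of a single row -/

/-- The recursion `cₙ = (m + n) cₙ₊₁` for `cₙ = E ∏_{j < n} |A_{pj}|²`. -/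
lemma mom_const_succ [μ.IsMulLeftInvariant] [IsProbabilityMeasure μ] {n : ℕ} (h : n + 1 ≤ m)
    (p : Fin m) :
    mom μ (Fin.castLE (Nat.le_of_succ_le h)) (fun _ : Fin n => p) (fun _ => p) =
      ((m : ℂ) + n) * mom μ (Fin.castLE h) (fun _ => p) (fun _ => p) := by
  set c := mom μ (Fin.castLE h) (fun _ => p) (fun _ => p) with hc
  let P : Fin (n + 1) → Fin m := fun _ => p
  let T : Fin m → ℂ := fun q => ∑ l, mom μ (Fin.castLE h)
    (Function.update P (Fin.last n) q) (Function.update P l q)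
  have hTp : T p = (n + 1) * c := by
    have : ∀ l, Function.update P l p = P := fun l => Function.update_eq_self l P
    simp only [T, this, sum_const, card_univ, Fintype.card_fin, nsmul_eq_mul]
    push_cast
    rfl
  have hTq : ∀ q, q ≠ p → T q = c := by
    intro q hq
    have key := mom_exchange μ hq.symm (Fin.castLE h) (Function.update P (Fin.last n) q) P
    have h1 : ({k | Function.update P (Fin.last n) q k = q} : Finset (Fin (n + 1))) =
        {Fin.last n} := by
      ext k
      by_cases hk : k = Fin.last n
      · simp [hk]
      · simp [hk, P, hq.symm]
    have h2 : ({k | P k = p} : Finset (Fin (n + 1))) = univ := by simp [P]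
    rw [h1, h2, sum_singleton, Function.update_idem] at key
    have h3 : Function.update P (Fin.last n) p = P := Function.update_eq_self _ P
    rw [h3] at key
    exact key.symm
  -- The first evaluation of `∑ q, T q`, by the exchange identity; `horth` leads to the second one.
  have hsum1 : ∑ q, T q = ((m : ℂ) + n) * c := by
    rw [← add_sum_erase _ _ (mem_univ p), hTp,
      sum_congr rfl fun q hq => hTq q (ne_of_mem_erase hq), sum_const, card_erase_of_mem (mem_univ p),
      card_univ, Fintype.card_fin, nsmul_eq_mul, Nat.cast_sub (by omega)]
    push_cast
    ring
  rw [← hsum1]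
  have hint : ∀ i i' : Fin (n + 1) → Fin m, Integrable (fun A : unitaryGroup (Fin m) ℂ =>
      ∏ k, (A.1 (i k) (Fin.castLE h k) * (starRingEnd ℂ) (A.1 (i' k) (Fin.castLE h k)))) μ :=
    fun i i' => integrable_of_cont μ <| continuous_finsetProd _ fun l _ =>
      (continuous_entry _ _).mul (Complex.continuous_conj.comp (continuous_entry _ _))
  have horth : ∀ (A : unitaryGroup (Fin m) ℂ) (a b : Fin m),
      ∑ q, A.1 q a * (starRingEnd ℂ) (A.1 q b) = if a = b then 1 else 0 := by
    intro A a b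
    have h1 := congrFun (congrFun (mem_unitaryGroup_iff'.1 A.2) b) a
    rw [mul_apply] at h1
    simp only [star_apply, RCLike.star_def, one_apply] at h1
    rw [show (if a = b then (1 : ℂ) else 0) = if b = a then 1 else 0 by simp only [eq_comm], ← h1]
    exact sum_congr rfl fun q _ => mul_comm _ _
  have hsum2 : ∀ l, ∑ q, mom μ (Fin.castLE h)
      (Function.update P (Fin.last n) q) (Function.update P l q) =
      if l = Fin.last n then
        mom μ (Fin.castLE (Nat.le_of_succ_le h)) (fun _ : Fin n => p) (fun _ => p) else 0 := by
    intro l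
    unfold mom
    rw [← integral_finsetSum _ fun q _ => hint _ _]
    split_ifs with hl
    · subst hl
      congr 1
      funext A
      simp only [Fin.prod_univ_castSucc, Function.update_self,
        Function.update_of_ne (Fin.castSucc_lt_last _).ne, ← mul_sum, horth, P]
      simp
    · rw [← integral_zero (unitaryGroup (Fin m) ℂ) ℂ (μ := μ)]
      congr 1
      funext A
      have hprod : ∀ (f : Fin m → Fin (n + 1) → ℂ) (a : Fin (n + 1)) (q : Fin m),
          ∏ k, f (Function.update P a q k) k = (∏ k ∈ univ.erase a, f p k) * f q a := by
        intro f a q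
        rw [← prod_erase_mul _ _ (mem_univ a), Function.update_self]
        congr 1
        exact prod_congr rfl fun k hk => by rw [Function.update_of_ne (ne_of_mem_erase hk)]
      simp only [prod_mul_distrib]
      simp only [hprod fun r k => A.1 r (Fin.castLE h k),
        hprod fun r k => (starRingEnd ℂ) (A.1 r (Fin.castLE h k))]
      rw [sum_congr rfl fun q _ => mul_mul_mul_comm _ _ _ _, ← mul_sum, horth, if_neg, mul_zero]
      exact fun e => hl (Fin.castLE_injective h e).symm
  simp only [T]
  rw [sum_comm]
  simp [hsum2]

/-- `E ∏_{j < n} |A_{pj}|² = 1 / (m (m + 1) ⋯ (m + n - 1))`. -/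
lemma mom_const [μ.IsMulLeftInvariant] [IsProbabilityMeasure μ] (p : Fin m) :
    ∀ (n : ℕ) (h : n ≤ m), mom μ (Fin.castLE h) (fun _ : Fin n => p) (fun _ => p) =
      (∏ k ∈ range n, ((m : ℂ) + k))⁻¹
  | 0, h => by simp [mom]
  | n + 1, h => by
    have hmn : (m : ℂ) + n ≠ 0 := by exact_mod_cast (by omega : m + n ≠ 0)
    rw [prod_range_succ, mul_inv, ← mom_const p n (Nat.le_of_succ_le h), mom_const_succ μ h,
      mul_comm, inv_mul_cancel_left₀ hmn]

omit [BorelSpace (unitaryGroup (Fin m) ℂ)] in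
lemma sum_Wg_eq_symMom {n : ℕ} (h : n ≤ m) :
    ∑ α : Equiv.Perm (Fin n), Wg m n h μ α = symMom μ (Fin.castLE h) (Fin.castLE h) := by
  unfold symMom
  -- Reindexing the product by `σ` turns permuted columns into rows permuted by `σ⁻¹`.
  rw [← Equiv.sum_comp (Equiv.inv (Equiv.Perm (Fin n)))]
  refine sum_congr rfl fun σ _ => ?_
  unfold Wg mom
  congr 1
  funext A
  rw [prod_mul_distrib, prod_mul_distrib]
  congr 1
  rw [← Equiv.prod_comp σ]
  simp

end Moments

/-- The sum of the Weingarten function over all permutations of `{1,…,n}` equals the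
reciprocal of the ascending factorial `m(m+1)⋯(m+n-1)`. -/
theorem sum_weingarten (m n : ℕ) (h : n ≤ m)
    [MeasurableSpace (unitaryGroup (Fin m) ℂ)] [BorelSpace (unitaryGroup (Fin m) ℂ)]
    (μ : Measure (unitaryGroup (Fin m) ℂ)) [μ.IsHaarMeasure] [IsProbabilityMeasure μ] :
    ∑ α : Equiv.Perm (Fin n), Wg m n h μ α
      = (∏ k ∈ Finset.range n, ((m : ℂ) + k))⁻¹ := by
  rw [sum_Wg_eq_symMom]
  cases n with
  | zero => simp [symMom, mom]
  | succ n => rw [symMom_initial μ h, mom_const]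
end

section
/- (Ryser's formula) For any k×k complex matrix B = (b_{i,j}), the permanent satisfies Per B = (−1)^k · ∑_{T ⊆ [k]} (−1)^{|T|} · ∏_{j=1}^k ∑_{i ∈ T} b_{i,j}, where the outer sum ranges over all subsets T of {1,…,k}. -/
/-! Each product `∏ j, ∑ i ∈ T, B i j` expands into the monomials `∏ j, B (f j) j` over the
functions `f` on `Fin k` with image contained in `T`. After exchanging sums, the coefficient of such
a monomial is `∑ (-1) ^ |T|` over all `T` containing the image of `f`. This vanishes unless the
image is everything (`sum_neg_one_pow_card_superset`), so only permutations survive, each with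
coefficient `(-1) ^ k`. -/

open Matrix Finset

/-- The signed count of the supersets of `S` is nonzero only when `S` is everything. -/
lemma sum_neg_one_pow_card_superset {k : ℕ} (S : Finset (Fin k)) :
    (∑ T : Finset (Fin k), if S ⊆ T then (-1 : ℂ) ^ T.card else 0)
      = if S = univ then (-1 : ℂ) ^ k else 0 := by
  -- Expand `∏ i, (-1 + [i ∉ S])`: the term of `T` is `(-1) ^ |T|` times `[Tᶜ ∩ S = ∅]`.
  have h := prod_add (fun _ => (-1 : ℂ)) (fun i => if i ∈ S then 0 else 1) (univ : Finset (Fin k))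
  rw [powerset_univ] at h
  have h1 : ∀ T : Finset (Fin k),
      (∏ i ∈ univ \ T, if i ∈ S then (0 : ℂ) else 1) = if S ⊆ T then 1 else 0 := by
    intro T
    split_ifs with hST
    · refine prod_eq_one fun i hi => if_neg fun hS => ?_
      exact (mem_sdiff.1 hi).2 (hST hS)
    · obtain ⟨i, hi, hT⟩ := not_subset.1 hST
      exact prod_eq_zero (i := i) (by simp [hT]) (if_pos hi)
  simp only [h1, prod_const, mul_ite, mul_one, mul_zero] at h
  rw [← h]
  split_ifs with hS
  · simp [hS]
  · obtain ⟨i, hi⟩ : ∃ i, i ∉ S := by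
      simpa [eq_univ_iff_forall] using hS
    exact prod_eq_zero (mem_univ i) (by simp [hi])

/-- Ryser's formula: for any `k × k` complex matrix `B`,
`Per B = (-1)^k ∑_{T ⊆ [k]} (-1)^{|T|} ∏_{j=1}^k ∑_{i ∈ T} B i j`. -/
theorem ryser_formula (k : ℕ) (B : Matrix (Fin k) (Fin k) ℂ) :
    B.permanent
      = (-1 : ℂ) ^ k *
          ∑ T : Finset (Fin k), (-1 : ℂ) ^ T.card * ∏ j : Fin k, ∑ i ∈ T, B i j := by
  have expand : ∀ T : Finset (Fin k), (-1 : ℂ) ^ T.card * ∏ j : Fin k, ∑ i ∈ T, B i j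
      = ∑ f : Fin k → Fin k,
          (if univ.image f ⊆ T then (-1 : ℂ) ^ T.card else 0) * ∏ j, B (f j) j := by
    intro T
    rw [prod_univ_sum, mul_sum]
    simp only [ite_mul, zero_mul]
    rw [← sum_filter]
    refine sum_congr ?_ fun _ _ => rfl
    ext f
    simp [Fintype.mem_piFinset, image_subset_iff]
  simp only [expand]
  rw [sum_comm]
  simp only [← sum_mul, sum_neg_one_pow_card_superset]
  simp only [ite_mul, zero_mul]
  rw [← sum_filter, ← mul_sum, ← mul_assoc, ← mul_pow]
  simp only [mul_neg, mul_one, neg_neg, one_pow, one_mul, permanent]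
  refine sum_bij (fun σ _ => (σ : Fin k → Fin k)) ?_ ?_ ?_ ?_
  · intro σ _
    simp [image_univ_of_surjective σ.surjective]
  · exact fun σ _ τ _ h => DFunLike.coe_injective h
  · intro f hf
    have hsurj : Function.Surjective f := by
      intro i
      have hi : i ∈ univ.image f := by
        rw [(mem_filter.1 hf).2]
        exact mem_univ i
      simpa using hi
    exact ⟨Equiv.ofBijective f (Finite.surjective_iff_bijective.1 hsurj), mem_univ _, rfl⟩
  · exact fun _ _ => rfl
end

section
/- (Ryser's formula for matrices with repeated rows) Let a = (a_{ν,j}) be an m×k complex matrix and let s_1,…,s_m be nonnegative integers with s_1 + ⋯ + s_m = k. Let B be the k×k matrix obtained by listing, for ν = 1,…,m, the ν-th row of a repeated s_ν times. Then Per B = (−1)^k · ∑_{r_1=0}^{s_1} ⋯ ∑_{r_m=0}^{s_m} (−1)^{r_1+⋯+r_m} · (∏_{ν=1}^m C(s_ν, r_ν)) · ∏_{j=1}^k (∑_{ν=1}^m r_ν · a_{ν,j}). -/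
open Matrix Finset

/-!
The classical Ryser formula writes the permanent of a `k × k` matrix as a signed sum over all sets
`S` of rows (`permanent_eq_sum_finset`): expanding `∏ⱼ ∑_{i ∈ S} Bᵢⱼ` over maps `f : [k] → [k]`, each
monomial `∏ⱼ B_{f j, j}` gets the total sign `∑_{S ⊇ range f} (-1)^|S|`, which vanishes unless `f`
is onto, hence a permutation (`sum_neg_one_pow_superset_range`).

When row `i` of `B` is row `z i` of `a`, the summand at `S` depends only on the numbers
`rᵥ = |S ∩ z⁻¹(ν)|`, and exactly `∏ᵥ C(sᵥ, rᵥ)` sets `S` share a given `r`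
(`card_filter_fiber_card`). Grouping the sets by `r` gives the formula.
-/

/-- Inclusion–exclusion: the signed count of the sets containing the range of `f` vanishes unless
`f` is onto. -/
lemma sum_neg_one_pow_superset_range {n R : Type*} [Fintype n] [DecidableEq n] [CommRing R]
    (f : n → n) [Decidable (Function.Surjective f)] :
    (∑ S : Finset n, (-1 : R) ^ S.card * if ∀ j, f j ∈ S then 1 else 0)
      = if Function.Surjective f then (-1) ^ Fintype.card n else 0 := by
  classical
  have key : ∀ S : Finset n, ((-1 : R) ^ S.card * if ∀ j, f j ∈ S then 1 else 0)
      = (∏ _i ∈ S, (-1 : R)) * ∏ i ∈ univ \ S, if ∃ j, f j = i then (0 : R) else 1 := by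
    intro S
    rw [prod_const]
    congr 1
    split_ifs with h
    · refine (prod_eq_one fun i hi => if_neg ?_).symm
      rintro ⟨j, rfl⟩
      exact (mem_sdiff.1 hi).2 (h j)
    · push Not at h
      obtain ⟨j, hj⟩ := h
      have hm : f j ∈ univ \ S := mem_sdiff.2 ⟨mem_univ _, hj⟩
      symm
      refine prod_eq_zero hm ?_
      exact if_pos ⟨j, rfl⟩
  -- the sum over `S` is the expansion of `∏ i, (-1 + [i ∉ range f])`
  rw [sum_congr rfl fun S _ => key S, ← powerset_univ, ← prod_add]
  split_ifs with h
  · rw [prod_congr rfl fun i _ => by rw [if_pos (h i)]]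
    simp
  · simp only [Function.Surjective, not_forall] at h
    obtain ⟨i, hi⟩ := h
    exact prod_eq_zero (mem_univ i) (by rw [if_neg hi]; ring)

/-- Ryser's formula for an arbitrary square matrix, as a sum over sets of rows. -/
lemma permanent_eq_sum_finset {n R : Type*} [Fintype n] [DecidableEq n] [CommRing R]
    (B : Matrix n n R) :
    B.permanent = (-1) ^ Fintype.card n *
      ∑ S : Finset n, (-1) ^ S.card * ∏ j, ∑ i ∈ S, B i j := by
  classical
  have expand : ∀ S : Finset n, (∏ j, ∑ i ∈ S, B i j)
      = ∑ f : n → n, (if ∀ j, f j ∈ S then 1 else 0) * ∏ j, B (f j) j := by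
    intro S
    rw [prod_univ_sum]
    simp only [ite_mul, one_mul, zero_mul, ← sum_filter]
    exact sum_congr (by ext f; simp) fun _ _ => rfl
  have perm : B.permanent
      = ∑ f : n → n, if Function.Surjective f then ∏ j, B (f j) j else 0 := by
    rw [Matrix.permanent, ← sum_filter]
    refine sum_bij (fun σ _ => ⇑σ) (by simp [Equiv.surjective])
      (fun σ _ τ _ h => DFunLike.coe_injective h) ?_ fun _ _ => rfl
    intro f hf
    have hb : Function.Bijective f := Finite.surjective_iff_bijective.1 (mem_filter.1 hf).2
    exact ⟨Equiv.ofBijective f hb, mem_univ _, rfl⟩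
  simp_rw [expand, mul_sum, ← mul_assoc]
  rw [sum_comm, perm]
  refine sum_congr rfl fun f _ => ?_
  rw [← sum_mul]
  simp_rw [mul_assoc]
  rw [← mul_sum, sum_neg_one_pow_superset_range]
  split_ifs
  · rw [← pow_add, Even.neg_one_pow ⟨_, rfl⟩, one_mul]
  · simp

/-- A set with prescribed numbers of elements in the fibres of `z` amounts to an independent choice
of a subset of each fibre. -/
lemma card_filter_fiber_card {n ι : Type*} [Fintype n] [DecidableEq n] [Fintype ι]
    [DecidableEq ι] (z : n → ι) (r : ι → ℕ) :
    #{S : Finset n | ∀ ν, #{i ∈ S | z i = ν} = r ν}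
      = ∏ ν, (#{i : n | z i = ν}).choose (r ν) := by
  rw [prod_congr rfl fun ν _ => (card_powersetCard (r ν) {i : n | z i = ν}).symm,
    ← Fintype.card_piFinset]
  refine card_bij' (fun S _ ν => {i ∈ S | z i = ν}) (fun g _ => ({i | i ∈ g (z i)} : Finset n))
    ?_ ?_ ?_ ?_
  · intro S hS
    simp only [mem_filter, mem_univ, true_and] at hS
    simp only [Fintype.mem_piFinset, mem_powersetCard]
    exact fun ν => ⟨filter_subset_filter _ (subset_univ S), hS ν⟩
  · intro g hg
    simp only [Fintype.mem_piFinset, mem_powersetCard] at hg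
    simp only [mem_filter, mem_univ, true_and]
    intro ν
    rw [← (hg ν).2]
    congr 1
    ext i
    have := @(hg ν).1 i
    simp only [mem_filter, mem_univ, true_and] at this ⊢
    grind
  · intro S _
    ext i
    simp
  · intro g hg
    simp only [Fintype.mem_piFinset, mem_powersetCard] at hg
    funext ν
    ext i
    have := @(hg ν).1 i
    simp only [mem_filter, mem_univ, true_and] at this ⊢
    grind

/-- Ryser's formula for matrices with repeated rows: if `B` is the `k × k` matrix whose `i`-th
row is row `z i` of an `m × k` matrix `a`, where each value `ν` occurs with multiplicity `s ν`
among the `z i` and `∑ ν, s ν = k`, then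
`Per B = (-1)^k ∑_{0 ≤ r ≤ s} (-1)^{∑ rᵥ} (∏ᵥ C(sᵥ, rᵥ)) ∏ⱼ (∑ᵥ rᵥ aᵥⱼ)`. -/
theorem ryser_formula_repeated_rows (m k : ℕ) (a : Matrix (Fin m) (Fin k) ℂ)
    (s : Fin m → ℕ) (hs : ∑ ν : Fin m, s ν = k) (z : Fin k → Fin m)
    (hz : ∀ ν : Fin m, (Finset.univ.filter fun i => z i = ν).card = s ν) :
    (Matrix.of fun i j => a (z i) j).permanent
      = (-1 : ℂ) ^ k *
          ∑ r : (ν : Fin m) → Fin (s ν + 1),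
            (-1 : ℂ) ^ (∑ ν : Fin m, (r ν : ℕ)) *
              (∏ ν : Fin m, ((s ν).choose (r ν) : ℂ)) *
                ∏ j : Fin k, ∑ ν : Fin m, ((r ν : ℕ) : ℂ) * a ν j := by
  classical
  rw [permanent_eq_sum_finset, Fintype.card_fin]
  congr 1
  have hlt : ∀ (S : Finset (Fin k)) (ν : Fin m), #{i ∈ S | z i = ν} < s ν + 1 := fun S ν =>
    Nat.lt_succ_of_le (hz ν ▸ card_le_card (filter_subset_filter _ (subset_univ S)))
  let p : Finset (Fin k) → (ν : Fin m) → Fin (s ν + 1) := fun S ν => ⟨_, hlt S ν⟩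
  rw [← sum_fiberwise univ p]
  refine sum_congr rfl fun r _ => ?_
  have hp : ∀ S, p S = r ↔ ∀ ν, #{i ∈ S | z i = ν} = (r ν : ℕ) := fun S => by
    simp [p, funext_iff, Fin.ext_iff]
  have hcard : #{S | p S = r} = ∏ ν, (s ν).choose (r ν) := by
    have h := card_filter_fiber_card z fun ν => (r ν : ℕ)
    simp only [hz] at h
    rw [← h]
    exact congrArg card (by ext S; simp [hp])
  have hterm : ∀ S ∈ ({S | p S = r} : Finset (Finset (Fin k))),
      ((-1 : ℂ) ^ S.card * ∏ j, ∑ i ∈ S, Matrix.of (fun i j => a (z i) j) i j)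
        = (-1 : ℂ) ^ (∑ ν, (r ν : ℕ)) * ∏ j, ∑ ν, ((r ν : ℕ) : ℂ) * a ν j := by
    intro S hS
    have h := (hp S).1 (mem_filter.1 hS).2
    congr 2
    · rw [card_eq_sum_card_fiberwise (f := z) (t := univ) (by simp)]
      exact sum_congr rfl fun ν _ => h ν
    · funext j
      rw [← sum_fiberwise S z]
      refine sum_congr rfl fun ν _ => ?_
      rw [sum_congr rfl fun i hi => by rw [Matrix.of_apply, (mem_filter.1 hi).2], sum_const,
        h ν, nsmul_eq_mul]
  rw [sum_congr rfl hterm, sum_const, hcard, nsmul_eq_mul]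
  push_cast
  ring
end

section
/- Suppose the array s = (s_1,…,s_m) is sampled uniformly at random from the set of all arrays of nonnegative integers with s_1 + ⋯ + s_m = n (where m ≥ 1, n ≥ 0). Then the expected value of ∏_{ν=1}^m (s_ν + 1) equals C(2m+n−1, n) / C(m+n−1, n). -/
/-!
Summing a product weight `∏ ν, f (s ν)` over the arrays `s` of length `m` with sum `n` gives the
coefficient of `Xⁿ` in `(∑ₖ f k Xᵏ) ^ m` (`sum_antidiagonalTuple_prod`). With `f = 1` the series
is `1 / (1 - X)`, so the number of arrays is the coefficient of `Xⁿ` in `(1 - X)⁻ᵐ`; with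
`f k = k + 1` the series is `1 / (1 - X)²`, so the weighted sum is the coefficient of `Xⁿ` in
`(1 - X)⁻²ᵐ`. Both are binomial coefficients by `coeff_mk_one_pow`.
-/

theorem sum_antidiagonalTuple_prod (m n : ℕ) (f : ℕ → ℚ) :
    ∑ s ∈ Finset.Nat.antidiagonalTuple m n, ∏ ν : Fin m, f (s ν) =
      PowerSeries.coeff n (PowerSeries.mk f ^ m) := by
  have h := PowerSeries.coeff_prod (fun _ : Fin m => PowerSeries.mk f) n Finset.univ
  rw [Finset.prod_const, Finset.card_univ, Fintype.card_fin] at h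
  rw [h]
  refine Finset.sum_bij' (fun s _ => Finsupp.equivFunOnFinite.symm s) (fun l _ => ⇑l) ?_ ?_ ?_ ?_ ?_
  · intro s hs
    simpa [Finset.mem_finsuppAntidiag, Finset.Nat.mem_antidiagonalTuple] using hs
  · intro l hl
    simpa [Finset.mem_finsuppAntidiag, Finset.Nat.mem_antidiagonalTuple] using hl
  · intro s _
    rfl
  · intro l _
    ext
    rfl
  · intro s _
    simp

theorem coeff_mk_one_pow {d : ℕ} (hd : 1 ≤ d) (n : ℕ) :
    PowerSeries.coeff n ((PowerSeries.mk 1 : PowerSeries ℚ) ^ d) =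
      ((d + n - 1).choose n : ℚ) := by
  obtain ⟨e, rfl⟩ := Nat.exists_eq_add_of_le' hd
  rw [PowerSeries.mk_one_pow_eq_mk_choose_add, PowerSeries.coeff_mk,
    show e + 1 + n - 1 = e + n by omega, Nat.choose_symm_add]

theorem mk_succ_eq_mk_one_sq :
    PowerSeries.mk (fun k : ℕ => (k : ℚ) + 1) = (PowerSeries.mk 1 : PowerSeries ℚ) ^ 2 := by
  rw [PowerSeries.mk_one_pow_eq_mk_choose_add ℚ 1]
  ext k
  simp [add_comm]

/-- If `s = (s₁,…,sₘ)` is sampled uniformly from the set of arrays of `m` nonnegative integers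
summing to `n`, the expected value of `∏ᵥ (sᵥ + 1)` is `C(2m+n-1, n) / C(m+n-1, n)`. -/
theorem expected_prod_succ_uniform (m n : ℕ) (hm : 1 ≤ m) :
    (∑ s ∈ Finset.Nat.antidiagonalTuple m n, ∏ ν : Fin m, ((s ν : ℚ) + 1)) /
        ((Finset.Nat.antidiagonalTuple m n).card : ℚ)
      = ((2 * m + n - 1).choose n : ℚ) / (((m + n - 1).choose n : ℚ)) := by
  have hcard : ((Finset.Nat.antidiagonalTuple m n).card : ℚ) = ((m + n - 1).choose n : ℚ) := by
    rw [← coeff_mk_one_pow hm, ← sum_antidiagonalTuple_prod]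
    simp
  rw [hcard, sum_antidiagonalTuple_prod m n (fun k => (k : ℚ) + 1), mk_succ_eq_mk_one_sq,
    ← pow_mul, coeff_mk_one_pow (by omega)]
end

section
/- For all integers m ≥ 1 and n ≥ 1, the following identity of rational numbers holds: ∑_{k=1}^n k · C(2m+k−1, k)/C(m+k−1, k) = ((n(m+1) − m + 1)(m+n))/((m+1)(m+2)) · C(2m+n, n+1)/C(m+n, n+1) + (2m(m−1))/((m+1)(m+2)). -/
/-!
Write `a k = C(2m+k-1, k) / C(m+k-1, k)`. The absorption identity for binomial coefficients gives
`(m + k) * a (k+1) = (2m + k) * a k`, and the quotient on the right-hand side of the theorem is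
`a (n+1)`. Hence the right-hand side is a telescoping antidifference of `k * a k`, vanishing at
`n = 0`, and the identity follows by induction on `n`.
-/

open Finset

/-- The two-term recurrence satisfied by the ratio of binomial coefficients, a consequence of
the absorption identity. -/
lemma choose_ratio_succ (m k : ℕ) (hm : 1 ≤ m) :
    ((m : ℚ) + k) * (((2 * m + k).choose (k + 1) : ℚ) / ((m + k).choose (k + 1) : ℚ))
      = (2 * m + k) * (((2 * m + k - 1).choose k : ℚ) / ((m + k - 1).choose k : ℚ)) := by
  obtain ⟨p, rfl⟩ : ∃ p, m = p + 1 := ⟨m - 1, by omega⟩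
  have absorb (q : ℕ) :
      ((q : ℚ) + 1) * (q.choose k : ℚ) = ((q + 1).choose (k + 1) : ℚ) * (k + 1) := by
    exact_mod_cast Nat.add_one_mul_choose_eq q k
  have h1 := absorb (2 * p + 1 + k)
  have h2 := absorb (p + k)
  rw [show 2 * (p + 1) + k - 1 = 2 * p + 1 + k by omega, show p + 1 + k - 1 = p + k by omega,
    show 2 * (p + 1) + k = 2 * p + 1 + k + 1 by omega, show p + 1 + k = p + k + 1 by omega]
  have c1 : ((p + k).choose k : ℚ) ≠ 0 := by
    exact_mod_cast (Nat.choose_pos (by omega)).ne'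
  have c2 : ((p + k + 1).choose (k + 1) : ℚ) ≠ 0 := by
    exact_mod_cast (Nat.choose_pos (by omega)).ne'
  have hk : (k : ℚ) + 1 ≠ 0 := by positivity
  push_cast at h1 h2 ⊢
  rw [mul_div_assoc', mul_div_assoc', div_eq_div_iff c2 c1]
  apply mul_right_cancel₀ hk
  linear_combination ((2 * p + 1 + k + 1).choose (k + 1) : ℚ) * (k + 1) * h2
    - ((p + k + 1).choose (k + 1) : ℚ) * (k + 1) * h1

/-- The closed form for `∑_{k=1}^n k · C(2m+k-1, k)/C(m+k-1, k)` as an identity of rational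
numbers. -/
theorem sum_k_choose_ratio (m n : ℕ) (hm : 1 ≤ m) (hn : 1 ≤ n) :
    ∑ k ∈ Finset.Icc 1 n,
        (k : ℚ) * ((2 * m + k - 1).choose k : ℚ) / ((m + k - 1).choose k : ℚ)
      = (((n : ℚ) * (m + 1) - m + 1) * (m + n)) / (((m : ℚ) + 1) * ((m : ℚ) + 2)) *
            (((2 * m + n).choose (n + 1) : ℚ) / ((m + n).choose (n + 1) : ℚ))
          + (2 * (m : ℚ) * ((m : ℚ) - 1)) / (((m : ℚ) + 1) * ((m : ℚ) + 2)) := by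
  -- The formula also holds at `n = 0`, which is the convenient base case.
  clear hn
  have h1 : (m : ℚ) + 1 ≠ 0 := by positivity
  have h2 : (m : ℚ) + 2 ≠ 0 := by positivity
  induction n with
  | zero =>
    have h0 : (m : ℚ) ≠ 0 := by exact_mod_cast (by omega : m ≠ 0)
    simp
    field_simp
    ring
  | succ n ih =>
    rw [Finset.sum_Icc_succ_top (by omega), ih]
    have h := choose_ratio_succ m (n + 1) hm
    rw [show 2 * m + (n + 1) - 1 = 2 * m + n by omega, show m + (n + 1) - 1 = m + n by omega] at *
    rw [mul_div_assoc ((n + 1 : ℕ) : ℚ)]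
    generalize ((2 * m + n).choose (n + 1) : ℚ) / ((m + n).choose (n + 1) : ℚ) = a at *
    generalize ((2 * m + (n + 1)).choose (n + 1 + 1) : ℚ) /
      ((m + (n + 1)).choose (n + 1 + 1) : ℚ) = b at *
    push_cast at h ⊢
    field_simp
    linear_combination -(((n : ℚ) + 1) * (m + 1) - m + 1) * h
end

section
/- Fix a positive integer θ and set m = θ·n. Then, as n → ∞, the ratio C(2m+n−1, n)/C(m+n−1, n) is asymptotically equivalent to √(2(θ+1)/(2θ+1)) · ((2θ+1)^{2θ+1} / ((4θ)^θ · (θ+1)^{θ+1}))^n; that is, the quotient of the left-hand side by the right-hand side tends to 1 as n → ∞. -/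
open Filter

/-!
Since `C(kn+n-1, n) = k/(k+1) · ((k+1)n)! / (n! (kn)!)`, the ratio of binomials is
`2(θ+1)/(2θ+1) · ((2θ+1)n)! (θn)! / ((2θn)! ((θ+1)n)!)`. Write each factorial as
`N! = S(N) √(2N) (N/e)^N`, where `S` is `Stirling.stirlingSeq`. Because
`(2θ+1) + θ = 2θ + (θ+1)`, all powers of `n` and `e` cancel, and what remains apart from the
values of `S` is exactly the claimed right-hand side. So for `n ≥ 1` the quotient in the theorem
*equals* `S((2θ+1)n) S(θn) / (S(2θn) S((θ+1)n))`, which tends to `1` since `S` tends to `√π ≠ 0`.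
-/

lemma choose_eq_factorial_ratio (k n : ℕ) (hk : 0 < k) (hn : 0 < n) :
    ((k * n + n - 1).choose n : ℝ) =
      (k : ℝ) / (k + 1) * ((((k + 1) * n).factorial : ℝ) /
        ((n.factorial : ℝ) * ((k * n).factorial : ℝ))) := by
  obtain ⟨j, hj⟩ : ∃ j, k * n = j + 1 :=
    Nat.exists_eq_succ_of_ne_zero (Nat.mul_pos hk hn).ne'
  have hjR : (k : ℝ) * n = j + 1 := by exact_mod_cast hj
  have hkR : (0 : ℝ) < k := by exact_mod_cast hk
  have hnR : (0 : ℝ) < n := by exact_mod_cast hn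
  have e1 : k * n + n - 1 = j + n := by omega
  have e2 : (k + 1) * n = (j + n) + 1 := by rw [add_mul, one_mul]; omega
  have h := Nat.choose_mul_factorial_mul_factorial (Nat.le_add_left n j)
  rw [Nat.add_sub_cancel] at h
  have hR : ((j + n).choose n : ℝ) * n.factorial * j.factorial = (j + n).factorial := by
    exact_mod_cast h
  rw [e1, e2, hj, Nat.factorial_succ, Nat.factorial_succ]
  push_cast
  rw [← hR, ← hjR]
  have h3 : (j : ℝ) + n + 1 = (k + 1) * n := by linarith
  rw [h3]
  have := Nat.factorial_pos n
  have := Nat.factorial_pos j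
  field_simp

/-- The factorial of a multiple `kn` in terms of the Stirling sequence, with the dependence on `k`
and on `n` separated so that the latter cancels in balanced factorial ratios. -/
lemma factorial_mul_eq_stirlingSeq (k n : ℕ) (hk : 0 < k) (hn : 0 < n) :
    ((k * n).factorial : ℝ) = Stirling.stirlingSeq (k * n) *
      (√2 * √(k : ℝ) * √(n : ℝ)) * ((k : ℝ) ^ k) ^ n * (((n : ℝ) / Real.exp 1) ^ n) ^ k := by
  have hkR : (0 : ℝ) < k := by exact_mod_cast hk
  have hnR : (0 : ℝ) < n := by exact_mod_cast hn
  have e1 : √(2 * ((k * n : ℕ) : ℝ)) = √2 * √(k : ℝ) * √(n : ℝ) := by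
    push_cast
    rw [Real.sqrt_mul (by norm_num), Real.sqrt_mul hkR.le, mul_assoc]
  have e2 : (((k * n : ℕ) : ℝ) / Real.exp 1) ^ (k * n) =
      ((k : ℝ) ^ k) ^ n * (((n : ℝ) / Real.exp 1) ^ n) ^ k := by
    push_cast
    rw [mul_div_assoc, mul_pow, pow_mul, ← pow_mul _ n k, mul_comm n k]
  rw [mul_assoc _ (((k : ℝ) ^ k) ^ n), ← e2, ← e1, Stirling.stirlingSeq, mul_assoc,
    div_mul_cancel₀]
  have : (0 : ℝ) < ((k * n : ℕ) : ℝ) := by exact_mod_cast Nat.mul_pos hk hn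
  positivity

/-- For `n ≥ 1` the quotient of the two sides is exactly a ratio of Stirling sequence values. -/
lemma choose_ratio_eq_stirlingSeq (θ n : ℕ) (hθ : 0 < θ) (hn : 0 < n) :
    (((2 * (θ * n) + n - 1).choose n : ℝ) / (((θ * n) + n - 1).choose n : ℝ)) /
        (Real.sqrt (2 * ((θ : ℝ) + 1) / (2 * (θ : ℝ) + 1)) *
          ((2 * (θ : ℝ) + 1) ^ (2 * θ + 1) /
              ((4 * (θ : ℝ)) ^ θ * ((θ : ℝ) + 1) ^ (θ + 1))) ^ n) =
      Stirling.stirlingSeq ((2 * θ + 1) * n) * Stirling.stirlingSeq (θ * n) /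
        (Stirling.stirlingSeq (2 * θ * n) * Stirling.stirlingSeq ((θ + 1) * n)) := by
  have hS : ∀ k, 0 < k → 0 < Stirling.stirlingSeq (k * n) := fun k hk => by
    obtain ⟨j, hj⟩ := Nat.exists_eq_succ_of_ne_zero (Nat.mul_pos hk hn).ne'
    rw [hj]; exact Stirling.stirlingSeq'_pos j
  have hS1 := hS (2 * θ + 1) (by omega)
  have hS2 := hS θ hθ
  have hS3 := hS (2 * θ) (by omega)
  have hS4 := hS (θ + 1) (by omega)
  have hT : (0 : ℝ) < θ := by exact_mod_cast hθ
  have hnR : (0 : ℝ) < n := by exact_mod_cast hn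
  rw [← mul_assoc 2 θ n, choose_eq_factorial_ratio (2 * θ) n (by omega) hn,
    choose_eq_factorial_ratio θ n hθ hn,
    factorial_mul_eq_stirlingSeq (2 * θ + 1) n (by omega) hn,
    factorial_mul_eq_stirlingSeq (2 * θ) n (by omega) hn,
    factorial_mul_eq_stirlingSeq (θ + 1) n (by omega) hn,
    factorial_mul_eq_stirlingSeq θ n hθ hn]
  push_cast
  have hP3 : (2 * (θ : ℝ)) ^ (2 * θ) = (4 * (θ : ℝ)) ^ θ * (θ : ℝ) ^ θ := by
    rw [pow_mul, ← mul_pow]; congr 1; ring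
  rw [hP3, Real.sqrt_div (by positivity), Real.sqrt_mul (by norm_num) ((θ : ℝ) + 1),
    Real.sqrt_mul (by norm_num) (θ : ℝ)]
  have hE : (0 : ℝ) < ((n : ℝ) / Real.exp 1) ^ n := by positivity
  have hA : (0 : ℝ) < √(2 * (θ : ℝ) + 1) := by positivity
  have hA2 : √(2 * (θ : ℝ) + 1) ^ 2 = 2 * (θ : ℝ) + 1 := Real.sq_sqrt (by positivity)
  have hD : (0 : ℝ) < √((θ : ℝ) + 1) := by positivity
  have hD2 : √((θ : ℝ) + 1) ^ 2 = (θ : ℝ) + 1 := Real.sq_sqrt (by positivity)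
  have hB : (0 : ℝ) < √(θ : ℝ) := by positivity
  have hs : (0 : ℝ) < √(2 : ℝ) := by positivity
  have hs2 : √(2 : ℝ) ^ 2 = 2 := Real.sq_sqrt (by norm_num)
  have hN : (0 : ℝ) < √(n : ℝ) := by positivity
  have hF : (0 : ℝ) < n.factorial := by exact_mod_cast Nat.factorial_pos n
  have hP1 : (0 : ℝ) < (2 * (θ : ℝ) + 1) ^ (2 * θ + 1) := by positivity
  have hP2 : (0 : ℝ) < (θ : ℝ) ^ θ := by positivity
  have hP4 : (0 : ℝ) < ((θ : ℝ) + 1) ^ (θ + 1) := by positivity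
  have hP5 : (0 : ℝ) < (4 * (θ : ℝ)) ^ θ := by positivity
  -- Treating the powers as atoms leaves an identity of rational functions, modulo the
  -- defining equations of the square roots.
  generalize (2 * (θ : ℝ) + 1) ^ (2 * θ + 1) = P1 at *
  generalize (θ : ℝ) ^ θ = P2 at *
  generalize ((θ : ℝ) + 1) ^ (θ + 1) = P4 at *
  generalize (4 * (θ : ℝ)) ^ θ = P5 at *
  generalize ((n : ℝ) / Real.exp 1) ^ n = E at *
  generalize √(2 * (θ : ℝ) + 1) = A at *
  generalize √((θ : ℝ) + 1) = D at *
  generalize √(θ : ℝ) = B at *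
  generalize √(2 : ℝ) = s at *
  generalize √(n : ℝ) = N at *
  rw [← hA2, ← hD2]
  have hE2 : E ^ (2 * θ) = E ^ θ * E ^ θ := by rw [two_mul, pow_add]
  simp only [div_pow, mul_pow, pow_succ E (2 * θ), pow_succ E θ, hE2]
  field_simp
  rw [hs2]

theorem choose_ratio_asymptotic (θ : ℕ) (hθ : 0 < θ) :
    Tendsto
      (fun n : ℕ =>
        (((2 * (θ * n) + n - 1).choose n : ℝ) / (((θ * n) + n - 1).choose n : ℝ)) /
          (Real.sqrt (2 * ((θ : ℝ) + 1) / (2 * (θ : ℝ) + 1)) *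
            ((2 * (θ : ℝ) + 1) ^ (2 * θ + 1) /
                ((4 * (θ : ℝ)) ^ θ * ((θ : ℝ) + 1) ^ (θ + 1))) ^ n))
      atTop (nhds 1) := by
  have hlim : ∀ k : ℕ, 0 < k →
      Tendsto (fun n : ℕ => Stirling.stirlingSeq (k * n)) atTop (nhds √Real.pi) := fun k hk =>
    Stirling.tendsto_stirlingSeq_sqrt_pi.comp (tendsto_id.const_mul_atTop' hk)
  have hpi : √Real.pi ≠ 0 := (Real.sqrt_pos.2 Real.pi_pos).ne'
  have h := ((hlim (2 * θ + 1) (by omega)).mul (hlim θ hθ)).div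
    ((hlim (2 * θ) (by omega)).mul (hlim (θ + 1) (by omega))) (mul_ne_zero hpi hpi)
  rw [div_self (mul_ne_zero hpi hpi)] at h
  refine h.congr' ?_
  filter_upwards [eventually_gt_atTop 0] with n hn
  exact (choose_ratio_eq_stirlingSeq θ n hθ hn).symm
end
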